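/- arXiv:1705.09595 — 9 statements merged into one kernel-verified Lean document; each statement's English description precedes it below -/
import Mathlib

section
/- Let N be a topological space equipped with its Borel σ-algebra, let φ : ℝ × N → N be a continuous flow (φ(0,x) = x and φ(t, φ(s,x)) = φ(t+s, x) for all t,s ∈ ℝ, x ∈ N), and let μ be a finite Borel measure on N invariant under the flow, i.e. the pushforward of μ under φ(t,·) equals μ for every t ∈ ℝ. Let Σ be a measurable space, ε > 0, j : Σ → N a measurable map, and define ι : ℝ × Σ → N by ι(t,q) = φ(t, j(q)). Assume that the restriction of ι to (−2ε, 2ε) × Σ is a measurable embedding (injective, measurable, and mapping measurable sets to Borel-measurable sets). Then there exists a finite measure μ_Σ on Σ, namely μ_Σ(B) = (2ε)^{−1} μ(ι([−ε,ε) × B)), such that for every measurable set A ⊆ [−ε, ε) × Σ one has μ(ι(A)) = (λ ⊗ μ_Σ)(A), where λ denotes Lebesgue measure on ℝ. -/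
open MeasureTheory Set

/-!
This is the Tonelli argument for the uniqueness of Haar measure `λ`, run inside a box `I × Z`. Let
`ν` be the pull-back of `μ` to the box along `ι`. Since `ι (s + t, q) = φ (s, ι (t, q))`, invariance
of `μ` says that `ν` is unchanged by translations that stay in the box. For `A ⊆ I × Z`, integrate
over `s` the mass of the points of `A` whose translate by `s` is still in the box: by invariance of
`λ` this is `λ I * ν A`. Moving these points by `s` first, the same integral becomes that of the
mass of the points `(t, q)` of the box with `(-s + t, q) ∈ A`, which is the integral of
`λ {t | (t, q) ∈ A}` against the second marginal of `ν`.
-/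

/-- A measure on `G × Z` is locally invariant over `I ⊆ G` if translating the `G`-coordinate keeps
the mass of every measurable subset of `I × Z` whose translate is still contained in `I × Z`. The
translate of `E` by `-s` is written as the preimage of `E` under translation by `s`. -/
def IsLocallyInvariantOver {G Z : Type*} [Add G] [MeasurableSpace G] [MeasurableSpace Z]
    (ν : Measure (G × Z)) (I : Set G) : Prop :=
  ∀ (s : G) (E : Set (G × Z)), MeasurableSet E → E ⊆ I ×ˢ univ →
    Prod.map (s + ·) id ⁻¹' E ⊆ I ×ˢ univ → ν (Prod.map (s + ·) id ⁻¹' E) = ν E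

section Averaging

variable {G Z : Type*} [AddGroup G] [MeasurableSpace G] [MeasurableAdd₂ G] [MeasurableSpace Z]

lemma lintegral_measure_inter_add_preimage {X : Type*} [MeasurableSpace X]
    (vol : Measure G) [SFinite vol] [vol.IsAddRightInvariant] (ν : Measure X) [SFinite ν]
    {f : X → G} (hf : Measurable f) {I : Set G} (hI : MeasurableSet I) (A : Set X) :
    ∫⁻ s, ν ((fun x => s + f x) ⁻¹' I ∩ A) ∂vol = vol I * ν A := by
  have hW : MeasurableSet {p : G × X | p.1 + f p.2 ∈ I} :=
    (measurable_fst.add (hf.comp measurable_snd)) hI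
  calc ∫⁻ s, ν ((fun x => s + f x) ⁻¹' I ∩ A) ∂vol
      = ∫⁻ s, ν.restrict A ((fun x => s + f x) ⁻¹' I) ∂vol := by
        simp only [Measure.restrict_apply (hf.const_add _ hI)]
    _ = (vol.prod (ν.restrict A)) {p | p.1 + f p.2 ∈ I} := (Measure.prod_apply hW).symm
    _ = ∫⁻ x in A, vol ((· + f x) ⁻¹' I) ∂ν := Measure.prod_apply_symm hW
    _ = vol I * ν A := by simp only [measure_preimage_add_right, setLIntegral_const]

lemma lintegral_measure_neg_add_preimage [MeasurableNeg G] (vol : Measure G) [SFinite vol]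
    [vol.IsAddRightInvariant] [vol.IsNegInvariant] (ν : Measure (G × Z)) [SFinite ν]
    {A : Set (G × Z)} (hA : MeasurableSet A) :
    ∫⁻ s, ν (Prod.map (-s + ·) id ⁻¹' A) ∂vol = (vol.prod (ν.map Prod.snd)) A := by
  have hW : MeasurableSet {p : G × G × Z | (-p.1 + p.2.1, p.2.2) ∈ A} :=
    (show Measurable fun p : G × G × Z => (-p.1 + p.2.1, p.2.2) by fun_prop) hA
  have hfiber (p : G × Z) : vol {s | (-s + p.1, p.2) ∈ A} = vol ((·, p.2) ⁻¹' A) :=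
    ((measurePreserving_add_right vol p.1).comp
      (Measure.measurePreserving_neg vol)).measure_preimage
        (measurable_prodMk_right hA).nullMeasurableSet
  calc ∫⁻ s, ν (Prod.map (-s + ·) id ⁻¹' A) ∂vol
      = (vol.prod ν) {p | (-p.1 + p.2.1, p.2.2) ∈ A} := (Measure.prod_apply hW).symm
    _ = ∫⁻ p, vol {s | (-s + p.1, p.2) ∈ A} ∂ν := Measure.prod_apply_symm hW
    _ = ∫⁻ p, vol ((·, p.2) ⁻¹' A) ∂ν := by simp only [hfiber]
    _ = ∫⁻ q, vol ((·, q) ⁻¹' A) ∂ν.map Prod.snd :=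
        (lintegral_map (measurable_measure_prodMk_right hA) measurable_snd).symm
    _ = (vol.prod (ν.map Prod.snd)) A := (Measure.prod_apply_symm hA).symm

theorem IsLocallyInvariantOver.measure_mul_eq_prod_map_snd [MeasurableNeg G] {vol : Measure G}
    [SFinite vol] [vol.IsAddRightInvariant] [vol.IsNegInvariant] {ν : Measure (G × Z)} [SFinite ν]
    {I : Set G} (hν : IsLocallyInvariantOver ν I) (hI : MeasurableSet I) {A : Set (G × Z)}
    (hA : MeasurableSet A) (hAI : A ⊆ I ×ˢ univ) :
    vol I * ν A = (vol.prod ((ν.restrict (I ×ˢ univ)).map Prod.snd)) A := by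
  have htranslate (s : G) : ν ((fun p : G × Z => s + p.1) ⁻¹' I ∩ A) =
      ν.restrict (I ×ˢ univ) (Prod.map (-s + ·) id ⁻¹' A) := by
    have hAs : MeasurableSet (Prod.map (-s + ·) id ⁻¹' A) :=
      ((measurable_const_add (-s)).prodMap measurable_id) hA
    have hpre : (fun p : G × Z => s + p.1) ⁻¹' I ∩ A =
        Prod.map (s + ·) id ⁻¹' (Prod.map (-s + ·) id ⁻¹' A ∩ I ×ˢ univ) := by
      ext ⟨t, q⟩
      simp [and_comm]
    rw [Measure.restrict_apply hAs, hpre]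
    exact hν s _ (hAs.inter (hI.prod .univ)) inter_subset_right
      (hpre ▸ inter_subset_right.trans hAI)
  rw [← lintegral_measure_inter_add_preimage vol ν measurable_fst hI A,
    ← lintegral_measure_neg_add_preimage vol _ hA]
  exact lintegral_congr htranslate

end Averaging

section Pullback

variable {X Y : Type*} [MeasurableSpace X] [MeasurableSpace Y] {f : X → Y} {S : Set X}

lemma measurableEmbedding_domRestrict (hS : MeasurableSet S) (hf : Measurable f)
    (hinj : InjOn f S) (himage : ∀ A ⊆ S, MeasurableSet A → MeasurableSet (f '' A)) :
    MeasurableEmbedding (S.domRestrict f) where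
  injective := hinj.injective
  measurable := hf.comp measurable_subtype_coe
  measurableSet_image' {A} hA := by
    rw [domRestrict_eq, image_comp]
    exact himage _ (Subtype.coe_image_subset S A) (hS.subtype_image hA)

lemma sFinite_comap (hf : MeasurableEmbedding f) (μ : Measure Y) [SFinite μ] :
    SFinite (μ.comap f) :=
  ⟨fun n => (sfiniteSeq μ n).comap f, fun _ => inferInstance, by
    ext A hA
    simp only [Measure.sum_apply _ hA, hf.comap_apply]
    rw [← Measure.sum_apply _ (hf.measurableSet_image.2 hA), sum_sfiniteSeq]⟩

/-- The pull-back of `μ` along the restriction of `f` to `S`, as a measure on the ambient type `X`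
carried by `S`. Like `Measure.comap`, it is meaningful when this restriction is a measurable
embedding. -/
noncomputable def pullbackOn (μ : Measure Y) (f : X → Y) (S : Set X) : Measure X :=
  (μ.comap (S.domRestrict f)).map Subtype.val

lemma sFinite_pullbackOn (hf : MeasurableEmbedding (S.domRestrict f)) (μ : Measure Y) [SFinite μ] :
    SFinite (pullbackOn μ f S) :=
  have := sFinite_comap hf μ
  inferInstanceAs (SFinite (Measure.map _ _))

lemma pullbackOn_apply (hf : MeasurableEmbedding (S.domRestrict f)) (μ : Measure Y) {A : Set X}
    (hA : MeasurableSet A) : pullbackOn μ f S A = μ (f '' (S ∩ A)) := by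
  rw [pullbackOn, Measure.map_apply measurable_subtype_coe hA, hf.comap_apply, domRestrict_eq,
    image_comp, Subtype.image_preimage_coe]

lemma pullbackOn_apply_of_subset (hf : MeasurableEmbedding (S.domRestrict f)) (μ : Measure Y)
    {A : Set X} (hA : MeasurableSet A) (hAS : A ⊆ S) : pullbackOn μ f S A = μ (f '' A) := by
  rw [pullbackOn_apply hf μ hA, inter_eq_right.2 hAS]

lemma restrict_pullbackOn (hf : MeasurableEmbedding (S.domRestrict f)) (μ : Measure Y)
    (hS : MeasurableSet S) : (pullbackOn μ f S).restrict S = pullbackOn μ f S := by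
  ext A hA
  rw [Measure.restrict_apply hA, pullbackOn_apply hf μ (hA.inter hS), pullbackOn_apply hf μ hA,
    inter_left_comm, inter_self, inter_comm]

lemma measurableSet_image_of_subset (hf : MeasurableEmbedding (S.domRestrict f)) {A : Set X}
    (hA : MeasurableSet A) (hAS : A ⊆ S) : MeasurableSet (f '' A) := by
  have himage := hf.measurableSet_image.2 (measurable_subtype_coe hA)
  rwa [domRestrict_eq, image_comp, Subtype.image_preimage_coe, inter_eq_right.2 hAS] at himage

end Pullback

lemma image_add_preimage_eq_preimage_image {G Z N : Type*} [AddGroup G] {T : N → N}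
    (hT : Function.Injective T) {ι : G × Z → N} {s : G}
    (hι : ∀ t q, ι (s + t, q) = T (ι (t, q))) (E : Set (G × Z)) :
    ι '' (Prod.map (s + ·) id ⁻¹' E) = T ⁻¹' (ι '' E) := by
  ext x
  constructor
  · rintro ⟨⟨t, q⟩, hE, rfl⟩
    exact ⟨(s + t, q), hE, hι t q⟩
  · rintro ⟨⟨t, q⟩, hE, hx⟩
    refine ⟨(-s + t, q), by simpa using hE, hT ?_⟩
    rw [← hι, add_neg_cancel_left, hx]

lemma isLocallyInvariantOver_pullbackOn {G Z N : Type*} [AddGroup G] [MeasurableSpace G]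
    [MeasurableAdd G] [MeasurableSpace Z] [MeasurableSpace N] {μ : Measure N} {ι : G × Z → N}
    {I : Set G} {T : G → N → N} (hT : ∀ s, Function.Injective (T s))
    (hμ : ∀ s, MeasurePreserving (T s) μ μ) (hι : ∀ s t q, ι (s + t, q) = T s (ι (t, q)))
    (hemb : MeasurableEmbedding ((I ×ˢ univ).domRestrict ι)) :
    IsLocallyInvariantOver (pullbackOn μ ι (I ×ˢ univ)) I := by
  intro s E hE hEI hsEI
  have hsE : MeasurableSet (Prod.map (s + ·) id ⁻¹' E) :=
    ((measurable_const_add s).prodMap measurable_id) hE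
  rw [pullbackOn_apply_of_subset hemb μ hsE hsEI, pullbackOn_apply_of_subset hemb μ hE hEI,
    image_add_preimage_eq_preimage_image (hT s) (hι s)]
  exact (hμ s).measure_preimage (measurableSet_image_of_subset hemb hE hEI).nullMeasurableSet

section Transversal

variable {G Z N : Type*} [MeasurableSpace G] [MeasurableSpace Z] [MeasurableSpace N]
  {ι : G × Z → N} {I : Set G}

/-- The measure `μ_Σ` that `μ` induces on the transversal `Z`: the second marginal of the pull-back
of `μ` to the box `I × Z`, normalized by the mass of `I`. It is meaningful when `ι` embeds the box
and `0 < vol I < ∞`. -/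
noncomputable def transversalMeasure (vol : Measure G) (μ : Measure N) (ι : G × Z → N)
    (I : Set G) : Measure Z :=
  (vol I)⁻¹ • (pullbackOn μ ι (I ×ˢ univ)).map Prod.snd

lemma transversalMeasure_apply (vol : Measure G) (μ : Measure N)
    (hemb : MeasurableEmbedding ((I ×ˢ univ).domRestrict ι)) {B : Set Z} (hB : MeasurableSet B) :
    transversalMeasure vol μ ι I B = (vol I)⁻¹ * μ (ι '' (I ×ˢ B)) := by
  rw [transversalMeasure, Measure.smul_apply, smul_eq_mul, Measure.map_apply measurable_snd hB,
    pullbackOn_apply hemb μ (measurable_snd hB), ← univ_prod, prod_inter_prod, inter_univ,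
    univ_inter]

lemma sFinite_transversalMeasure (vol : Measure G) (μ : Measure N) [SFinite μ]
    (hemb : MeasurableEmbedding ((I ×ˢ univ).domRestrict ι)) :
    SFinite (transversalMeasure vol μ ι I) :=
  have := sFinite_pullbackOn hemb μ
  inferInstanceAs (SFinite ((vol I)⁻¹ • Measure.map _ _))

theorem measure_image_eq_prod_transversalMeasure [AddGroup G] [MeasurableAdd₂ G]
    [MeasurableNeg G] (vol : Measure G) [SFinite vol] [vol.IsAddRightInvariant]
    [vol.IsNegInvariant] {μ : Measure N} [SFinite μ] (hI : MeasurableSet I)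
    (hI0 : vol I ≠ 0) (hItop : vol I ≠ ⊤)
    (hemb : MeasurableEmbedding ((I ×ˢ univ).domRestrict ι))
    (hinv : IsLocallyInvariantOver (pullbackOn μ ι (I ×ˢ univ)) I)
    {A : Set (G × Z)} (hA : MeasurableSet A) (hAI : A ⊆ I ×ˢ univ) :
    μ (ι '' A) = (vol.prod (transversalMeasure vol μ ι I)) A := by
  have := sFinite_pullbackOn hemb μ
  have haverage := hinv.measure_mul_eq_prod_map_snd (vol := vol) hI hA hAI
  rw [restrict_pullbackOn hemb μ (hI.prod .univ),
    pullbackOn_apply_of_subset hemb μ hA hAI] at haverage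
  rw [transversalMeasure, Measure.prod_smul_right, Measure.smul_apply, smul_eq_mul, ← haverage,
    ENNReal.inv_mul_cancel_left hI0 hItop]

end Transversal

theorem flow_invariant_measure_factorizes_general
    {G : Type*} [AddGroup G] [MeasurableSpace G] [MeasurableAdd₂ G] [MeasurableNeg G]
    (vol : Measure G) [SFinite vol] [vol.IsAddRightInvariant] [vol.IsNegInvariant]
    {N : Type*} [MeasurableSpace N]
    (φ : G × N → N) (hφ : ∀ t, Measurable fun x => φ (t, x))
    (hφ0 : ∀ x, φ (0, x) = x)
    (hφadd : ∀ t s x, φ (t, φ (s, x)) = φ (t + s, x))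
    (μ : Measure N) [SFinite μ]
    (hinv : ∀ t : G, Measure.map (fun x => φ (t, x)) μ = μ)
    {Z : Type*} [MeasurableSpace Z]
    {I : Set G} (hI : MeasurableSet I) (hI0 : vol I ≠ 0) (hItop : vol I ≠ ⊤)
    (j : Z → N) (ι : G × Z → N) (hι : ∀ t q, ι (t, q) = φ (t, j q))
    (hemb : MeasurableEmbedding ((I ×ˢ (univ : Set Z)).domRestrict ι)) :
    ∃ μSigma : Measure Z, SFinite μSigma ∧
      (∀ B : Set Z, MeasurableSet B → μSigma B = (vol I)⁻¹ * μ (ι '' (I ×ˢ B))) ∧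
      ∀ A : Set (G × Z), MeasurableSet A → A ⊆ I ×ˢ univ →
        μ (ι '' A) = (vol.prod μSigma) A := by
  have hφinj (s : G) : Function.Injective fun x => φ (s, x) :=
    Function.LeftInverse.injective (g := fun x => φ (-s, x)) fun x => by
      simp only [hφadd, neg_add_cancel, hφ0]
  have hlocal : IsLocallyInvariantOver (pullbackOn μ ι (I ×ˢ univ)) I :=
    isLocallyInvariantOver_pullbackOn hφinj (fun s => ⟨hφ s, hinv s⟩)
      (fun s t q => by simp only [hι, hφadd]) hemb
  exact ⟨transversalMeasure vol μ ι I, sFinite_transversalMeasure vol μ hemb,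
    fun _ hB => transversalMeasure_apply vol μ hemb hB,
    fun _ hA hAI => measure_image_eq_prod_transversalMeasure vol hI hI0 hItop hemb hlocal hA hAI⟩

/-- Lemma 2.1 (flow picture): a flow-invariant finite Borel measure factorizes as
`dt ⊗ μ_Σ` in a flow box around a transversal. -/
theorem flow_invariant_measure_factorizes
    {N : Type*} [TopologicalSpace N] [MeasurableSpace N] [BorelSpace N]
    (φ : ℝ × N → N) (hφcont : Continuous φ)
    (hφ0 : ∀ x, φ (0, x) = x)
    (hφadd : ∀ t s x, φ (t, φ (s, x)) = φ (t + s, x))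
    (μ : Measure N) [IsFiniteMeasure μ]
    (hinv : ∀ t : ℝ, Measure.map (fun x => φ (t, x)) μ = μ)
    {Z : Type*} [MeasurableSpace Z] (ε : ℝ) (hε : 0 < ε)
    (j : Z → N) (hj : Measurable j)
    (ι : ℝ × Z → N) (hι : ∀ t q, ι (t, q) = φ (t, j q))
    (hinj : Set.InjOn ι (Set.Ioo (-(2*ε)) (2*ε) ×ˢ (Set.univ : Set Z)))
    (hmeas : Measurable ι)
    (himage : ∀ A : Set (ℝ × Z), A ⊆ Set.Ioo (-(2*ε)) (2*ε) ×ˢ Set.univ →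
      MeasurableSet A → MeasurableSet (ι '' A)) :
    ∃ μSigma : Measure Z, IsFiniteMeasure μSigma ∧
      (∀ B : Set Z, MeasurableSet B →
        μSigma B = (ENNReal.ofReal (2*ε))⁻¹ * μ (ι '' (Set.Ico (-ε) ε ×ˢ B))) ∧
      ∀ A : Set (ℝ × Z), MeasurableSet A → A ⊆ Set.Ico (-ε) ε ×ˢ Set.univ →
        μ (ι '' A) = (volume.prod μSigma) A := by
  have hbox : Ico (-ε) ε ×ˢ (univ : Set Z) ⊆ Ioo (-(2*ε)) (2*ε) ×ˢ univ :=
    prod_mono_left (Ico_subset_Ioo (by linarith) (by linarith))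
  have hvol : volume (Ico (-ε) ε) = ENNReal.ofReal (2*ε) := by
    rw [Real.volume_Ico, sub_neg_eq_add, two_mul]
  have hvol0 : ENNReal.ofReal (2*ε) ≠ 0 := (ENNReal.ofReal_pos.2 (by positivity)).ne'
  obtain ⟨μSigma, -, hB, hA⟩ := flow_invariant_measure_factorizes_general volume φ
    (fun t => (hφcont.comp (.prodMk_right t)).measurable) hφ0 hφadd μ hinv measurableSet_Ico
    (hvol ▸ hvol0) (hvol ▸ ENNReal.ofReal_ne_top) j ι hι
    (measurableEmbedding_domRestrict (measurableSet_Ico.prod .univ) hmeas (hinj.mono hbox)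
      fun A hA => himage A (hA.trans hbox))
  rw [hvol] at hB
  refine ⟨μSigma, ⟨?_⟩, hB, hA⟩
  rw [hB univ .univ]
  exact ENNReal.mul_lt_top (ENNReal.inv_lt_top.2 (pos_iff_ne_zero.2 hvol0)) (measure_lt_top _ _)
end

section
/- Let Σ be a measurable space, ε > 0, and let μ be a finite measure on ℝ × Σ (with the product of the Borel σ-algebra on ℝ and the σ-algebra of Σ) concentrated on (−2ε, 2ε) × Σ, i.e. μ((ℝ ∖ (−2ε,2ε)) × Σ) = 0. Assume μ is invariant under time translations where defined: for every t ∈ ℝ and every measurable E ⊆ (−2ε,2ε) × Σ such that the translate E_t := {(s+t, q) : (s,q) ∈ E} is also contained in (−2ε,2ε) × Σ, one has μ(E_t) = μ(E). Then, with μ_Σ the finite measure on Σ defined by μ_Σ(B) := (2ε)^{−1} μ([−ε,ε) × B), one has μ(A) = (λ ⊗ μ_Σ)(A) for every measurable A ⊆ [−ε, ε) × Σ, where λ denotes Lebesgue measure on ℝ. -/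
open MeasureTheory Set

/-!
Let `ν` be Lebesgue measure and `W = [-ε, ε)`. For measurable `A ⊆ W × Σ`, integrate the fibre
measure `ν {u | (u, q) ∈ A}` over `(s, q) ∈ W × Σ` with respect to `μ`. Substituting `u = s + t` and
exchanging the integrals produces `μ {(s, q) | s ∈ W, (s + t, q) ∈ A}` under the integral over `t`;
by invariance this is `μ {(s, q) ∈ A | s - t ∈ W}`. Exchanging back, each point `(s, q)` of `A` is
counted with weight `ν {t | s - t ∈ W} = ν W`, so the integral equals `ν W * μ A`.
-/

section

variable {G Z : Type*} [MeasurableSpace G] [MeasurableSpace Z]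

/-- Invariance of a measure on `G × Z` under translations of the first coordinate, for those
measurable sets that lie in the window `W × Z` both before and after translation. -/
def IsFstTranslationInvariantOn [Add G] (μ : Measure (G × Z)) (W : Set G) : Prop :=
  ∀ t : G, ∀ E : Set (G × Z), MeasurableSet E → E ⊆ W ×ˢ univ →
    (fun p : G × Z => (p.1 + t, p.2)) '' E ⊆ W ×ˢ univ →
    μ ((fun p : G × Z => (p.1 + t, p.2)) '' E) = μ E

/-- The measure induced on the transversal `Z` by a measure `μ` on the flow box `W × Z`: the mass
of `W × B` per unit of `ν`-length of `W`. -/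
noncomputable def transverseMeasure (ν : Measure G) (μ : Measure (G × Z)) (W : Set G) :
    Measure Z :=
  (ν W)⁻¹ • (μ.restrict (W ×ˢ univ)).map Prod.snd

lemma transverseMeasure_apply (ν : Measure G) (μ : Measure (G × Z)) (W : Set G) {B : Set Z}
    (hB : MeasurableSet B) : transverseMeasure ν μ W B = (ν W)⁻¹ * μ (W ×ˢ B) := by
  rw [transverseMeasure, Measure.smul_apply, smul_eq_mul, Measure.map_apply measurable_snd hB,
    Measure.restrict_apply (measurable_snd hB), ← univ_prod, prod_inter_prod, univ_inter,
    inter_univ]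

lemma isFiniteMeasure_transverseMeasure {ν : Measure G} (μ : Measure (G × Z)) [IsFiniteMeasure μ]
    {W : Set G} (hW₀ : ν W ≠ 0) : IsFiniteMeasure (transverseMeasure ν μ W) where
  measure_univ_lt_top := by
    rw [transverseMeasure_apply ν μ W .univ]
    exact ENNReal.mul_lt_top (ENNReal.inv_lt_top.2 hW₀.bot_lt) (measure_lt_top _ _)

instance (ν : Measure G) (μ : Measure (G × Z)) [SFinite μ] (W : Set G) :
    SFinite (transverseMeasure ν μ W) :=
  inferInstanceAs (SFinite ((ν W)⁻¹ • (μ.restrict (W ×ˢ univ)).map Prod.snd))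

lemma prod_transverseMeasure_apply (ν : Measure G) [SFinite ν] (μ : Measure (G × Z)) [SFinite μ]
    (W : Set G) {A : Set (G × Z)} (hA : MeasurableSet A) :
    (ν.prod (transverseMeasure ν μ W)) A =
      (ν W)⁻¹ * ∫⁻ p in W ×ˢ univ, ν {u | (u, p.2) ∈ A} ∂μ := by
  rw [Measure.prod_apply_symm hA, transverseMeasure, lintegral_smul_measure, smul_eq_mul,
    lintegral_map (measurable_measure_prodMk_right hA) measurable_snd]
  rfl

namespace IsFstTranslationInvariantOn

lemma mono [Add G] {μ : Measure (G × Z)} {V W : Set G} (hμ : IsFstTranslationInvariantOn μ W)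
    (hVW : V ⊆ W) : IsFstTranslationInvariantOn μ V := fun t E hE hEV htE =>
  have hsub : V ×ˢ (univ : Set Z) ⊆ W ×ˢ univ := prod_mono_left hVW
  hμ t E hE (hEV.trans hsub) (htE.trans hsub)

variable {μ : Measure (G × Z)} {W : Set G} {A : Set (G × Z)}

lemma restrict_apply_translate_preimage [AddGroup G] [MeasurableAdd G]
    (hμ : IsFstTranslationInvariantOn μ W) (hW : MeasurableSet W) (hA : MeasurableSet A)
    (hAW : A ⊆ W ×ˢ univ) (t : G) :
    μ.restrict (W ×ˢ univ) {p | (p.1 + t, p.2) ∈ A} = μ.restrict A {p | p.1 - t ∈ W} := by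
  have htranslate : Measurable fun p : G × Z => (p.1 + t, p.2) := by fun_prop
  have himage : (fun p : G × Z => (p.1 + t, p.2)) '' ({p | (p.1 + t, p.2) ∈ A} ∩ W ×ˢ univ) =
      {p | p.1 - t ∈ W} ∩ A := by
    ext ⟨s, q⟩
    constructor
    · rintro ⟨⟨s, q⟩, ⟨hmemA, hmemW, -⟩, ⟨⟩⟩
      exact ⟨by simpa using hmemW, hmemA⟩
    · rintro ⟨hmemW, hmemA⟩
      exact ⟨(s - t, q), ⟨by simpa using hmemA, hmemW, mem_univ q⟩, by simp⟩
  have hpreimage : MeasurableSet {p : G × Z | (p.1 + t, p.2) ∈ A} := htranslate hA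
  rw [Measure.restrict_apply hpreimage, Measure.restrict_apply' hA, ← himage]
  refine (hμ t _ (hpreimage.inter (hW.prod .univ)) inter_subset_right ?_).symm
  rw [himage]
  exact inter_subset_right.trans hAW

variable [AddGroup G] [MeasurableAdd₂ G] [MeasurableNeg G] {ν : Measure G} [SFinite ν]
  [ν.IsAddLeftInvariant] [ν.IsNegInvariant] [SFinite μ]

lemma lintegral_measure_fiber (hμ : IsFstTranslationInvariantOn μ W) (hW : MeasurableSet W)
    (hA : MeasurableSet A) (hAW : A ⊆ W ×ˢ univ) :
    ∫⁻ p in W ×ˢ univ, ν {u | (u, p.2) ∈ A} ∂μ = ν W * μ A := by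
  have hshift : MeasurableSet {x : (G × Z) × G | (x.1.1 + x.2, x.1.2) ∈ A} :=
    (by fun_prop : Measurable fun x : (G × Z) × G => (x.1.1 + x.2, x.1.2)) hA
  have hwindow : MeasurableSet {x : (G × Z) × G | x.1.1 - x.2 ∈ W} :=
    (by fun_prop : Measurable fun x : (G × Z) × G => x.1.1 - x.2) hW
  calc ∫⁻ p in W ×ˢ univ, ν {u | (u, p.2) ∈ A} ∂μ
      = ∫⁻ p in W ×ˢ univ, ν {t | (p.1 + t, p.2) ∈ A} ∂μ :=
        lintegral_congr fun p => (measure_preimage_add ν p.1 {u | (u, p.2) ∈ A}).symm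
    _ = ∫⁻ t, μ.restrict (W ×ˢ univ) {p | (p.1 + t, p.2) ∈ A} ∂ν :=
        (Measure.prod_apply hshift).symm.trans (Measure.prod_apply_symm hshift)
    _ = ∫⁻ t, μ.restrict A {p | p.1 - t ∈ W} ∂ν :=
        lintegral_congr fun t => hμ.restrict_apply_translate_preimage hW hA hAW t
    _ = ∫⁻ p in A, ν {t | p.1 - t ∈ W} ∂μ :=
        (Measure.prod_apply_symm hwindow).symm.trans (Measure.prod_apply hwindow)
    _ = ∫⁻ _ in A, ν W ∂μ :=
        lintegral_congr fun p =>
          (Measure.measurePreserving_sub_left ν p.1).measure_preimage hW.nullMeasurableSet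
    _ = ν W * μ A := setLIntegral_const A (ν W)

end IsFstTranslationInvariantOn

theorem translation_invariant_measure_factorizes_general [AddGroup G] [MeasurableAdd₂ G]
    [MeasurableNeg G] {ν : Measure G} [SFinite ν] [ν.IsAddLeftInvariant] [ν.IsNegInvariant]
    {μ : Measure (G × Z)} [SFinite μ] {W : Set G} (hW : MeasurableSet W) (hW₀ : ν W ≠ 0)
    (hW_top : ν W ≠ ⊤) (hμ : IsFstTranslationInvariantOn μ W) {A : Set (G × Z)}
    (hA : MeasurableSet A) (hAW : A ⊆ W ×ˢ univ) :
    μ A = (ν.prod (transverseMeasure ν μ W)) A := by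
  rw [prod_transverseMeasure_apply ν μ W hA, hμ.lintegral_measure_fiber hW hA hAW,
    ENNReal.inv_mul_cancel_left hW₀ hW_top]

end

/-- Lemma 2.1 (flow-box coordinates): a finite measure on `ℝ × Σ`, concentrated on the
strip `(-2ε,2ε) × Σ` and invariant under time translations where defined, factorizes as
`dt ⊗ μ_Σ` on `[-ε,ε) × Σ`. -/
theorem translation_invariant_measure_factorizes
    {Z : Type*} [MeasurableSpace Z] (ε : ℝ) (hε : 0 < ε)
    (μ : Measure (ℝ × Z)) [IsFiniteMeasure μ]
    (hconc : μ ((Set.Ioo (-(2*ε)) (2*ε))ᶜ ×ˢ (Set.univ : Set Z)) = 0)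
    (hinv : ∀ t : ℝ, ∀ E : Set (ℝ × Z), MeasurableSet E →
      E ⊆ Set.Ioo (-(2*ε)) (2*ε) ×ˢ Set.univ →
      (fun p : ℝ × Z => (p.1 + t, p.2)) '' E ⊆ Set.Ioo (-(2*ε)) (2*ε) ×ˢ Set.univ →
      μ ((fun p : ℝ × Z => (p.1 + t, p.2)) '' E) = μ E) :
    ∃ μSigma : Measure Z, IsFiniteMeasure μSigma ∧
      (∀ B : Set Z, MeasurableSet B →
        μSigma B = (ENNReal.ofReal (2*ε))⁻¹ * μ (Set.Ico (-ε) ε ×ˢ B)) ∧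
      ∀ A : Set (ℝ × Z), MeasurableSet A → A ⊆ Set.Ico (-ε) ε ×ˢ Set.univ →
        μ A = (volume.prod μSigma) A := by
  have hvol : volume (Ico (-ε) ε) = ENNReal.ofReal (2 * ε) := by
    rw [Real.volume_Ico, sub_neg_eq_add, two_mul]
  have hvol₀ : volume (Ico (-ε) ε) ≠ 0 := by simp [hε]
  have hμ : IsFstTranslationInvariantOn μ (Ico (-ε) ε) :=
    .mono hinv (Ico_subset_Ioo (by linarith) (by linarith))
  exact ⟨transverseMeasure volume μ (Ico (-ε) ε), isFiniteMeasure_transverseMeasure μ hvol₀,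
    fun B hB => by rw [transverseMeasure_apply volume μ _ hB, hvol],
    fun A hA hAW => translation_invariant_measure_factorizes_general measurableSet_Ico hvol₀
      measure_Ico_lt_top.ne hμ hA hAW⟩
end

section
/- Let d ≥ 1, ε > 0, and let μ be a finite Borel measure on ℝ × ℝ^d concentrated on (−2ε, 2ε) × ℝ^d, i.e. μ((ℝ ∖ (−2ε,2ε)) × ℝ^d) = 0. Assume that ∫ ∂_t F(t,q) dμ(t,q) = 0 for every smooth function F : ℝ × ℝ^d → ℝ with compact support contained in (−2ε,2ε) × ℝ^d. Then there exists a finite Borel measure μ_Σ on ℝ^d, namely μ_Σ(B) = (2ε)^{−1} μ([−ε,ε) × B), such that μ(A) = (λ ⊗ μ_Σ)(A) for every Borel set A ⊆ [−ε, ε) × ℝ^d, where λ denotes Lebesgue measure on ℝ. -/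
open MeasureTheory Set
open TopologicalSpace Manifold Distributions

/-!
Test the invariance on products `F (t, q) = H t * g q`. A test function `h` on the interval `I` has
a primitive `H` that is again a test function on `I` exactly when `∫ h = 0`; subtracting from an
arbitrary `h` the multiple `(∫ h) • ρ` of a fixed bump `ρ` of integral one achieves this. Hence, for
every spatial test function `g ≥ 0`, the time marginal of `g μ` is a multiple of Lebesgue measure
on `I`. The integrals of `g` against the spatial measures `B ↦ μ (V × B)` with `V ⊆ I` are thus
proportional to `λ(V)`, and since this holds for all `g`, so are these measures themselves. This is
the product formula on rectangles.
-/

section TestFunctions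

variable {E : Type*} [NormedAddCommGroup E] [NormedSpace ℝ E]

lemma integrable_testFunction [MeasurableSpace E] [BorelSpace E] {Ω : Opens E} (f : 𝓓(Ω, ℝ))
    (μ : Measure E) [IsLocallyFiniteMeasure μ] : Integrable f μ :=
  f.integrable ((locallyIntegrable_const 1).locallyIntegrableOn _)

variable [FiniteDimensional ℝ E]

lemma exists_testFunction_eqOn_one {K U : Set E} {Ω : Opens E} (hK : IsCompact K) (hU : IsOpen U)
    (hKU : K ⊆ U) (hUΩ : U ⊆ Ω) :
    ∃ f : 𝓓(Ω, ℝ), (∀ x, f x ∈ Icc 0 1) ∧ EqOn f 1 K ∧ Function.support f ⊆ U := by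
  obtain ⟨L, hL, hKL, hLU⟩ := exists_compact_between hK hU hKU
  obtain ⟨f, f_smooth, f_range, f_support, hf_one⟩ :=
    exists_contMDiff_support_eq_eq_one_iff 𝓘(ℝ, E) (n := ⊤) isOpen_interior hK.isClosed hKL
  have h_support : Function.support f ⊆ L := f_support.trans_subset interior_subset
  have h_tsupport : tsupport f ⊆ L := closure_minimal h_support hL.isClosed
  exact ⟨⟨f, f_smooth.contDiff, .of_support_subset_isCompact hL h_support,
    h_tsupport.trans (hLU.trans hUΩ)⟩, fun x => f_range (mem_range_self x),
    fun x hx => (hf_one x).1 hx, h_support.trans hLU⟩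

variable [MeasurableSpace E] [BorelSpace E]

lemma exists_testFunction_integral_eq_one {Ω : Opens E} (hΩ : (Ω : Set E).Nonempty) (μ : Measure E)
    [IsFiniteMeasureOnCompacts μ] [μ.IsOpenPosMeasure] :
    ∃ ρ : 𝓓(Ω, ℝ), (∀ x, 0 ≤ ρ x) ∧ ∫ x, ρ x ∂μ = 1 := by
  obtain ⟨x, hx⟩ := hΩ
  obtain ⟨f, hf, hf_one, -⟩ := exists_testFunction_eqOn_one isCompact_singleton Ω.isOpen
    (singleton_subset_iff.2 hx) subset_rfl
  have hfx : f x ≠ 0 := by simp [hf_one rfl]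
  have h_pos : 0 < ∫ x, f x ∂μ := f.continuous.integral_pos_of_hasCompactSupport_nonneg_nonzero
    f.hasCompactSupport (fun x => (hf x).1) hfx
  refine ⟨(∫ x, f x ∂μ)⁻¹ • f, fun x => mul_nonneg (inv_nonneg.2 h_pos.le) (hf x).1, ?_⟩
  calc ∫ x, (∫ x, f x ∂μ)⁻¹ * f x ∂μ = (∫ x, f x ∂μ)⁻¹ * ∫ x, f x ∂μ := integral_const_mul ..
    _ = 1 := inv_mul_cancel₀ h_pos.ne'

lemma measure_le_of_integral_testFunction_eq {Ω : Opens E} {μ ν : Measure E}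
    [IsLocallyFiniteMeasure μ] [IsLocallyFiniteMeasure ν]
    (h : ∀ f : 𝓓(Ω, ℝ), (∀ x, 0 ≤ f x) → ∫ x, f x ∂μ = ∫ x, f x ∂ν)
    {U : Set E} (hU : IsOpen U) (hUΩ : U ⊆ Ω) : μ U ≤ ν U := by
  rw [hU.measure_eq_iSup_isCompact]
  refine iSup₂_le fun K hKU => iSup_le fun hK => ?_
  obtain ⟨f, hf, hf_one, hf_support⟩ := exists_testFunction_eqOn_one hK hU hKU hUΩ
  have hf_nonneg : ∀ x, 0 ≤ f x := fun x => (hf x).1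
  have ofReal_integral (m : Measure E) [IsLocallyFiniteMeasure m] :
      ENNReal.ofReal (∫ x, f x ∂m) = ∫⁻ x, ENNReal.ofReal (f x) ∂m :=
    ofReal_integral_eq_lintegral_ofReal (integrable_testFunction f m) (.of_forall hf_nonneg)
  calc μ K = ∫⁻ x, K.indicator 1 x ∂μ := (lintegral_indicator_one hK.measurableSet).symm
    _ ≤ ∫⁻ x, ENNReal.ofReal (f x) ∂μ := lintegral_mono fun x =>
        indicator_apply_le' (fun hx => by simp [hf_one hx]) fun _ => zero_le
    _ = ∫⁻ x, ENNReal.ofReal (f x) ∂ν := by rw [← ofReal_integral, h f hf_nonneg, ofReal_integral]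
    _ ≤ ∫⁻ x, U.indicator 1 x ∂ν := lintegral_mono fun x =>
        le_indicator_apply (fun _ => by simp [(hf x).2])
          fun hx => by simp [Function.notMem_support.1 fun hx' => hx (hf_support hx')]
    _ = ν U := lintegral_indicator_one hU.measurableSet

lemma restrict_eq_of_integral_testFunction_eq {Ω : Opens E} {μ ν : Measure E}
    [IsLocallyFiniteMeasure μ] [IsLocallyFiniteMeasure ν]
    (h : ∀ f : 𝓓(Ω, ℝ), (∀ x, 0 ≤ f x) → ∫ x, f x ∂μ = ∫ x, f x ∂ν) :
    μ.restrict Ω = ν.restrict Ω := by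
  refine Measure.OuterRegular.ext_isOpen fun U hU => ?_
  have hUΩ : IsOpen (U ∩ Ω) := hU.inter Ω.isOpen
  rw [Measure.restrict_apply hU.measurableSet, Measure.restrict_apply hU.measurableSet]
  exact le_antisymm (measure_le_of_integral_testFunction_eq h hUΩ inter_subset_right)
    (measure_le_of_integral_testFunction_eq (fun f hf => (h f hf).symm) hUΩ inter_subset_right)

end TestFunctions

section Interval

lemma hasDerivAt_integral_Iic {F : Type*} [NormedAddCommGroup F] [NormedSpace ℝ F] [CompleteSpace F]
    {f : ℝ → F} (hf : Continuous f) (hf_int : Integrable f) (t : ℝ) :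
    HasDerivAt (fun u => ∫ x in Iic u, f x) (f t) t := by
  have h_eq : (fun u => ∫ x in Iic u, f x) = fun u => (∫ x in 0..u, f x) + ∫ x in Iic 0, f x := by
    ext u
    rw [← intervalIntegral.integral_Iic_sub_Iic hf_int.integrableOn hf_int.integrableOn,
      sub_add_cancel]
  rw [h_eq]
  exact (hf.integral_hasStrictDerivAt 0 t).hasDerivAt.add_const _

variable {I : Opens ℝ} [hI : (I : Set ℝ).OrdConnected]

lemma exists_testFunction_deriv_eq {h : 𝓓(I, ℝ)} (h_int : ∫ t, h t = 0) :
    ∃ H : 𝓓(I, ℝ), deriv H = h := by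
  obtain h_empty | h_ne := (tsupport h).eq_empty_or_nonempty
  · exact ⟨0, by simp [tsupport_eq_empty_iff.1 h_empty, FunLike.coe_zero]⟩
  have hK : IsCompact (tsupport h) := h.hasCompactSupport
  set a := sInf (tsupport h)
  set b := sSup (tsupport h)
  have h_zero : ∀ t ∉ Icc a b, h t = 0 := fun t ht => image_eq_zero_of_notMem_tsupport
    fun ht' => ht ⟨csInf_le hK.bddBelow ht', le_csSup hK.bddAbove ht'⟩
  have hab : Icc a b ⊆ I :=
    hI.out (h.tsupport_subset (hK.sInf_mem h_ne)) (h.tsupport_subset (hK.sSup_mem h_ne))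
  have h_deriv : ∀ t, HasDerivAt (fun u => ∫ x in Iic u, h x) (h t) t := hasDerivAt_integral_Iic
    h.continuous (integrable_testFunction h volume)
  have h_support : Function.support (fun u => ∫ x in Iic u, h x) ⊆ Icc a b := by
    intro u hu
    by_contra hu'
    obtain hua | hbu : u < a ∨ b < u := by rwa [mem_Icc, not_and_or, not_le, not_le] at hu'
    · exact hu (setIntegral_eq_zero_of_forall_eq_zero fun x hx =>
        h_zero x fun hx' => (hx.trans_lt hua).not_ge hx'.1)
    · exact hu ((setIntegral_eq_integral_of_forall_compl_eq_zero fun x hx =>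
        h_zero x fun hx' => hx (hx'.2.trans hbu.le)).trans h_int)
  have h_deriv_eq : deriv (fun u => ∫ x in Iic u, h x) = h := funext fun t => (h_deriv t).deriv
  exact ⟨⟨_, contDiff_infty_iff_deriv.2
    ⟨fun t => (h_deriv t).differentiableAt, by rw [h_deriv_eq]; exact h.contDiff⟩,
    .of_support_subset_isCompact isCompact_Icc h_support,
    (closure_minimal h_support isClosed_Icc).trans hab⟩, h_deriv_eq⟩

lemma exists_restrict_eq_smul_volume {ν : Measure ℝ} [IsLocallyFiniteMeasure ν]
    (hν : ∀ H : 𝓓(I, ℝ), ∫ t, deriv H t ∂ν = 0) :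
    ∃ c : NNReal, ν.restrict I = c • volume.restrict I := by
  obtain h_empty | h_ne := (I : Set ℝ).eq_empty_or_nonempty
  · exact ⟨0, by simp [h_empty]⟩
  obtain ⟨ρ, hρ_nonneg, hρ⟩ := exists_testFunction_integral_eq_one h_ne volume
  have integral_sub_smul (h : 𝓓(I, ℝ)) (c : ℝ) (m : Measure ℝ) [IsLocallyFiniteMeasure m] :
      ∫ t, (h - c • ρ) t ∂m = ∫ t, h t ∂m - c * ∫ t, ρ t ∂m := by
    rw [← integral_const_mul, ← integral_sub (integrable_testFunction h m)
      ((integrable_testFunction ρ m).const_mul c)]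
    rfl
  have h_integral (h : 𝓓(I, ℝ)) : ∫ t, h t ∂ν = (∫ t, h t) * ∫ t, ρ t ∂ν := by
    obtain ⟨H, hH⟩ := exists_testFunction_deriv_eq (h := h - (∫ t, h t) • ρ)
      (by rw [integral_sub_smul, hρ, mul_one, sub_self])
    rw [← sub_eq_zero, ← integral_sub_smul, ← hH, hν]
  let c : NNReal := ⟨∫ t, ρ t ∂ν, integral_nonneg hρ_nonneg⟩
  refine ⟨c, ?_⟩
  rw [← Measure.restrict_smul]
  refine restrict_eq_of_integral_testFunction_eq fun h _ => ?_
  rw [integral_smul_nnreal_measure, h_integral, mul_comm]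
  rfl

end Interval

section Invariance

/-- `∂_t` annihilates `μ` on `I × E` in the sense of distributions. -/
def IsTimeInvariantOn {E : Type*} [NormedAddCommGroup E] [NormedSpace ℝ E] [MeasurableSpace E]
    (μ : Measure (ℝ × E)) (I : Set ℝ) : Prop :=
  ∀ F : ℝ × E → ℝ, ContDiff ℝ (⊤ : ℕ∞) F → HasCompactSupport F → tsupport F ⊆ I ×ˢ univ →
    ∫ p, deriv (fun s => F (s, p.2)) p.1 ∂μ = 0

/-- The spatial marginal `B ↦ μ (V × B)` of the part of `μ` with times in `V`. -/
noncomputable def slabMarginal {E : Type*} [MeasurableSpace E] (μ : Measure (ℝ × E)) (V : Set ℝ) :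
    Measure E :=
  (μ.restrict (V ×ˢ univ)).snd

/-- The candidate `μ_Σ`: the spatial marginal of `μ` per unit of time spent in `V`. -/
noncomputable def timeAverage {E : Type*} [MeasurableSpace E] (μ : Measure (ℝ × E)) (V : Set ℝ) :
    Measure E :=
  (volume V)⁻¹ • slabMarginal μ V

/-- The law of the time coordinate under `μ` weighted by a spatial density `g ≥ 0`
(the negative part of `g` is discarded). -/
noncomputable def timeMarginal {E : Type*} [MeasurableSpace E] (μ : Measure (ℝ × E)) (g : E → ℝ) :
    Measure ℝ :=
  (μ.withDensity fun p => ENNReal.ofReal (g p.2)).fst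

section Measurable

variable {E : Type*} [MeasurableSpace E] {μ : Measure (ℝ × E)}

lemma slabMarginal_apply (V : Set ℝ) {B : Set E} (hB : MeasurableSet B) :
    slabMarginal μ V B = μ (V ×ˢ B) := by
  rw [slabMarginal, Measure.snd_apply hB, Measure.restrict_apply (measurable_snd hB)]
  congr 1
  ext p
  simp [and_comm]

lemma timeAverage_apply (V : Set ℝ) {B : Set E} (hB : MeasurableSet B) :
    timeAverage μ V B = (volume V)⁻¹ * μ (V ×ˢ B) := by
  rw [timeAverage, Measure.smul_apply, slabMarginal_apply V hB, smul_eq_mul]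

lemma integral_timeMarginal {g : E → ℝ} (hg : Measurable g) (hg_nonneg : ∀ q, 0 ≤ g q)
    {h : ℝ → ℝ} (hh : StronglyMeasurable h) :
    ∫ t, h t ∂timeMarginal μ g = ∫ p, h p.1 * g p.2 ∂μ := by
  rw [timeMarginal, Measure.fst, integral_map_of_stronglyMeasurable measurable_fst hh,
    integral_withDensity_eq_integral_toReal_smul (by fun_prop)
      (.of_forall fun _ => ENNReal.ofReal_lt_top)]
  simp only [ENNReal.toReal_ofReal (hg_nonneg _), smul_eq_mul, mul_comm]

lemma integral_slabMarginal {g : E → ℝ} (hg : Measurable g) (hg_nonneg : ∀ q, 0 ≤ g q) {V : Set ℝ}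
    (hV : MeasurableSet V) : ∫ q, g q ∂slabMarginal μ V = (timeMarginal μ g).real V := by
  rw [slabMarginal, Measure.snd, integral_map_of_stronglyMeasurable measurable_snd
      hg.stronglyMeasurable,
    ← integral_indicator (hV.prod .univ), ← integral_indicator_one hV,
    integral_timeMarginal hg hg_nonneg (stronglyMeasurable_one.indicator hV)]
  refine integral_congr_ae (.of_forall fun p => ?_)
  by_cases hp : p.1 ∈ V <;> simp [hp]

end Measurable

section FiniteOnCompacts

variable {E : Type*} [TopologicalSpace E] [MeasurableSpace E] [BorelSpace E] {μ : Measure (ℝ × E)}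
  [IsFiniteMeasureOnCompacts μ]

lemma isFiniteMeasureOnCompacts_timeMarginal {g : E → ℝ} (hg : Continuous g)
    (hg_compact : HasCompactSupport g) :
    IsFiniteMeasureOnCompacts (timeMarginal μ g) := by
  refine ⟨fun K hK => ?_⟩
  have hKg : IsCompact (K ×ˢ tsupport g) := hK.prod hg_compact
  calc timeMarginal μ g K = ∫⁻ p in Prod.fst ⁻¹' K, ENNReal.ofReal (g p.2) ∂μ := by
        rw [timeMarginal, Measure.fst_apply hK.measurableSet,
          withDensity_apply _ (measurable_fst hK.measurableSet)]
    _ = ∫⁻ p in K ×ˢ tsupport g, ENNReal.ofReal (g p.2) ∂μ := by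
        rw [← setLIntegral_eq_of_support_subset (s := Prod.snd ⁻¹' tsupport g) fun p hp =>
            subset_tsupport g fun h_zero => hp (by simp [h_zero]),
          Measure.restrict_restrict (measurable_snd (isClosed_tsupport g).measurableSet),
          prod_eq, inter_comm]
    _ < ⊤ := setLIntegral_lt_top_of_isCompact hKg.measure_ne_top hKg
        (f := fun p => (g p.2).toNNReal) (by fun_prop)

variable [T2Space E]

lemma isFiniteMeasureOnCompacts_slabMarginal {V : Set ℝ} (hV : Bornology.IsBounded V) :
    IsFiniteMeasureOnCompacts (slabMarginal μ V) := by
  refine ⟨fun K hK => ?_⟩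
  rw [slabMarginal_apply V hK.measurableSet]
  exact (measure_mono (prod_mono subset_closure subset_rfl)).trans_lt
    (hV.isCompact_closure.prod hK).measure_lt_top

lemma isFiniteMeasureOnCompacts_timeAverage {V : Set ℝ}
    (hV : Bornology.IsBounded V) (hV_ne : volume V ≠ 0) :
    IsFiniteMeasureOnCompacts (timeAverage μ V) := by
  have := isFiniteMeasureOnCompacts_slabMarginal (μ := μ) hV
  exact .smul (slabMarginal μ V) (ENNReal.inv_ne_top.2 hV_ne)

end FiniteOnCompacts

variable {E : Type*} [NormedAddCommGroup E] [NormedSpace ℝ E] [MeasurableSpace E] [BorelSpace E]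
  {μ : Measure (ℝ × E)} {I : Opens ℝ}

lemma IsTimeInvariantOn.integral_deriv_timeMarginal (hμ : IsTimeInvariantOn μ I)
    (H : 𝓓(I, ℝ)) {g : E → ℝ} (hg : ContDiff ℝ (⊤ : ℕ∞) g) (hg_compact : HasCompactSupport g)
    (hg_nonneg : ∀ q, 0 ≤ g q) :
    ∫ t, deriv H t ∂timeMarginal μ g = 0 := by
  have h_support : Function.support (fun p : ℝ × E => H p.1 * g p.2) ⊆ tsupport H ×ˢ tsupport g :=
    fun p hp => ⟨subset_tsupport _ (left_ne_zero_of_mul hp),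
      subset_tsupport _ (right_ne_zero_of_mul hp)⟩
  have h_compact : IsCompact (tsupport H ×ˢ tsupport g) := H.hasCompactSupport.prod hg_compact
  have h_tsupport : tsupport (fun p : ℝ × E => H p.1 * g p.2) ⊆ I ×ˢ univ :=
    (closure_minimal h_support h_compact.isClosed).trans
      (prod_mono H.tsupport_subset (subset_univ _))
  calc ∫ t, deriv H t ∂timeMarginal μ g = ∫ p, deriv H p.1 * g p.2 ∂μ :=
        integral_timeMarginal hg.continuous.measurable hg_nonneg (stronglyMeasurable_deriv _)
    _ = ∫ p, deriv (fun s => H s * g p.2) p.1 ∂μ := by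
        simp only [deriv_mul_const_field]
    _ = 0 := hμ _ ((H.contDiff.comp contDiff_fst).mul (hg.comp contDiff_snd))
        (.of_support_subset_isCompact h_compact h_support) h_tsupport

variable [hI : (I : Set ℝ).OrdConnected] {V W : Set ℝ} [IsLocallyFiniteMeasure μ]

lemma IsTimeInvariantOn.volume_mul_integral_slabMarginal_comm (hμ : IsTimeInvariantOn μ I)
    {g : E → ℝ} (hg : ContDiff ℝ (⊤ : ℕ∞) g) (hg_compact : HasCompactSupport g)
    (hg_nonneg : ∀ q, 0 ≤ g q) (hV : MeasurableSet V) (hVI : V ⊆ I) (hW : MeasurableSet W)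
    (hWI : W ⊆ I) :
    volume.real W * ∫ q, g q ∂slabMarginal μ V = volume.real V * ∫ q, g q ∂slabMarginal μ W := by
  have := isFiniteMeasureOnCompacts_timeMarginal (μ := μ) hg.continuous hg_compact
  obtain ⟨c, hc⟩ := exists_restrict_eq_smul_volume fun H =>
    hμ.integral_deriv_timeMarginal H hg hg_compact hg_nonneg
  have integral_slabMarginal_eq {S : Set ℝ} (hS : MeasurableSet S) (hSI : S ⊆ I) :
      ∫ q, g q ∂slabMarginal μ S = c * volume.real S := by
    rw [integral_slabMarginal hg.continuous.measurable hg_nonneg hS, measureReal_def,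
      ← Measure.restrict_eq_self _ hSI, hc, Measure.smul_apply, Measure.restrict_eq_self _ hSI,
      ENNReal.toReal_smul, NNReal.smul_def, smul_eq_mul, measureReal_def]
  rw [integral_slabMarginal_eq hV hVI, integral_slabMarginal_eq hW hWI]
  ring

variable [FiniteDimensional ℝ E]

lemma IsTimeInvariantOn.volume_smul_slabMarginal_comm (hμ : IsTimeInvariantOn μ I)
    (hV : MeasurableSet V) (hV_bounded : Bornology.IsBounded V) (hVI : V ⊆ I)
    (hW : MeasurableSet W) (hW_bounded : Bornology.IsBounded W) (hWI : W ⊆ I) :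
    volume W • slabMarginal μ V = volume V • slabMarginal μ W := by
  have := isFiniteMeasureOnCompacts_slabMarginal (μ := μ) hV_bounded
  have := isFiniteMeasureOnCompacts_slabMarginal (μ := μ) hW_bounded
  have : IsFiniteMeasureOnCompacts (volume W • slabMarginal μ V) :=
    .smul _ hW_bounded.measure_lt_top.ne
  have : IsFiniteMeasureOnCompacts (volume V • slabMarginal μ W) :=
    .smul _ hV_bounded.measure_lt_top.ne
  have h_restrict : (volume W • slabMarginal μ V).restrict (⊤ : Opens E) =
      (volume V • slabMarginal μ W).restrict (⊤ : Opens E) := by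
    refine restrict_eq_of_integral_testFunction_eq fun g hg_nonneg => ?_
    rw [integral_smul_measure, integral_smul_measure]
    exact hμ.volume_mul_integral_slabMarginal_comm g.contDiff g.hasCompactSupport hg_nonneg
      hV hVI hW hWI
  simpa only [Opens.coe_top, Measure.restrict_univ] using h_restrict

lemma IsTimeInvariantOn.restrict_eq_prod_timeAverage (hμ : IsTimeInvariantOn μ I)
    (hV : MeasurableSet V) (hV_bounded : Bornology.IsBounded V) (hVI : V ⊆ I)
    (hV_ne : volume V ≠ 0) :
    μ.restrict (V ×ˢ univ) = (volume.restrict V).prod (timeAverage μ V) := by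
  have := isFiniteMeasureOnCompacts_timeAverage (μ := μ) hV_bounded hV_ne
  refine (Measure.prod_eq fun s B hs hB => ?_).symm
  have h_comm : volume (s ∩ V) * μ (V ×ˢ B) = volume V * μ ((s ∩ V) ×ˢ B) := by
    have := congrArg (· B) (hμ.volume_smul_slabMarginal_comm hV hV_bounded hVI (hs.inter hV)
      (hV_bounded.subset inter_subset_right) (inter_subset_right.trans hVI))
    simpa only [Measure.smul_apply, slabMarginal_apply _ hB, smul_eq_mul] using this
  rw [Measure.restrict_apply (hs.prod hB), Measure.restrict_apply hs, timeAverage_apply V hB,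
    prod_inter_prod, inter_univ, mul_left_comm, h_comm, ← mul_assoc,
    ENNReal.inv_mul_cancel hV_ne hV_bounded.measure_lt_top.ne, one_mul]

theorem dt_invariant_measure_factorizes_general (hμ : IsTimeInvariantOn μ I)
    (hV : MeasurableSet V) (hV_bounded : Bornology.IsBounded V) (hVI : V ⊆ I)
    (hV_ne : volume V ≠ 0) :
    ∃ μSigma : Measure E, IsLocallyFiniteMeasure μSigma ∧
      (∀ B : Set E, MeasurableSet B → μSigma B = (volume V)⁻¹ * μ (V ×ˢ B)) ∧
      ∀ A : Set (ℝ × E), A ⊆ V ×ˢ univ → μ A = (volume.prod μSigma) A := by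
  have := isFiniteMeasureOnCompacts_timeAverage (μ := μ) hV_bounded hV_ne
  refine ⟨timeAverage μ V, inferInstance, fun B => timeAverage_apply V, fun A hAV => ?_⟩
  calc μ A = μ.restrict (V ×ˢ univ) A := (Measure.restrict_eq_self _ hAV).symm
    _ = ((volume.restrict V).prod (timeAverage μ V)) A := by
        rw [hμ.restrict_eq_prod_timeAverage hV hV_bounded hVI hV_ne]
    _ = (volume.prod (timeAverage μ V)).restrict (V ×ˢ univ) A := by
        rw [← Measure.prod_restrict, Measure.restrict_univ]
    _ = (volume.prod (timeAverage μ V)) A := Measure.restrict_eq_self _ hAV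

end Invariance

/-- Lemma 2.1 (distributional form, in a chart `Σ = ℝ^d`): a finite Borel measure on
`ℝ × ℝ^d` concentrated on the strip `(-2ε,2ε) × ℝ^d` and annihilated by `∂_t`
factorizes as `dt ⊗ μ_Σ` on `[-ε,ε) × ℝ^d`. -/
theorem dt_invariant_measure_factorizes
    (d : ℕ) (hd : 1 ≤ d) (ε : ℝ) (hε : 0 < ε)
    (μ : Measure (ℝ × (Fin d → ℝ))) [IsFiniteMeasure μ]
    (hconc : μ ((Set.Ioo (-(2*ε)) (2*ε))ᶜ ×ˢ (Set.univ : Set (Fin d → ℝ))) = 0)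
    (hinv : ∀ F : ℝ × (Fin d → ℝ) → ℝ, ContDiff ℝ (⊤ : ℕ∞) F → HasCompactSupport F →
      tsupport F ⊆ Set.Ioo (-(2*ε)) (2*ε) ×ˢ Set.univ →
      ∫ p, deriv (fun s => F (s, p.2)) p.1 ∂μ = 0) :
    ∃ μSigma : Measure (Fin d → ℝ), IsFiniteMeasure μSigma ∧
      (∀ B : Set (Fin d → ℝ), MeasurableSet B →
        μSigma B = (ENNReal.ofReal (2*ε))⁻¹ * μ (Set.Ico (-ε) ε ×ˢ B)) ∧
      ∀ A : Set (ℝ × (Fin d → ℝ)), MeasurableSet A → A ⊆ Set.Ico (-ε) ε ×ˢ Set.univ →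
        μ A = (volume.prod μSigma) A := by
  have h_volume : volume (Ico (-ε) ε) = ENNReal.ofReal (2 * ε) := by
    rw [Real.volume_Ico, sub_neg_eq_add, two_mul]
  obtain ⟨μSigma, -, h_apply, h_prod⟩ := dt_invariant_measure_factorizes_general
    (I := ⟨_, isOpen_Ioo⟩) (hI := ordConnected_Ioo) hinv measurableSet_Ico
    (Metric.isBounded_Ico (-ε) ε) (fun t ht => ⟨by linarith [ht.1], by linarith [ht.2]⟩)
    (by simp [hε])
  rw [h_volume] at h_apply
  refine ⟨μSigma, ⟨?_⟩, h_apply, fun A _ => h_prod A⟩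
  rw [h_apply univ .univ]
  exact ENNReal.mul_lt_top (by simp [hε]) (measure_lt_top μ _)
end

section
/- Let d ≥ 1, ε > 0, and let μ be a finite Borel measure on ℝ × ℝ^d concentrated on (−2ε, 2ε) × ℝ^d, i.e. μ((ℝ ∖ (−2ε,2ε)) × ℝ^d) = 0. Assume that for every smooth f : ℝ × ℝ^d → ℝ with compact support contained in (−2ε,2ε) × ℝ^d and every smooth χ : ℝ → ℝ with compact support contained in (−2ε,2ε) and ∫_ℝ χ(t) dt = 1 one has ∫ f(t,q) dμ(t,q) = ∫ χ(t) ( ∫_ℝ f(s,q) ds ) dμ(t,q). Then for every closed interval [a,b] ⊆ (−2ε, 2ε) and every Borel set B ⊆ ℝ^d, μ([a,b] × B) = (b − a) · (2ε)^{−1} · μ([−ε,ε] × B). -/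
open MeasureTheory Set

/-!
Testing with `f (t, q) = g t * h q` and `χ = ψ / ∫ ψ` turns the test identity into
`(∫ ψ) * ∫ g t * h q ∂μ = (∫ g) * ∫ ψ t * h q ∂μ`, which is symmetric in `g` and `ψ` and no longer
needs a normalization. For compact sets `C`, `D`, `K` choose cutoffs `g`, `ψ`, `h` with values in
`[0, 1]` that equal `1` exactly there: their powers converge pointwise to the indicator functions,
so dominated convergence gives `|D| * μ (C × K) = |C| * μ (D × K)`. Inner regularity then replaces
the compact sets by Borel sets.
-/

open Filter Topology
open scoped Manifold ContDiff

lemma mul_eq_one_iff_of_mem_Icc {R : Type*} [Semiring R] [PartialOrder R] [IsOrderedRing R]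
    {x y : R} (hx : x ∈ Icc 0 1) (hy : y ∈ Icc 0 1) :
    x * y = 1 ↔ x = 1 ∧ y = 1 := by
  refine ⟨fun hxy => ?_, fun ⟨h1, h2⟩ => by rw [h1, h2, one_mul]⟩
  exact ⟨le_antisymm hx.2 (hxy ▸ mul_le_of_le_one_right hx.1 hy.2),
    le_antisymm hy.2 (hxy ▸ mul_le_of_le_one_left hy.1 hx.2)⟩

lemma tendsto_pow_atTop_indicator_one {x : ℝ} (hx : x ∈ Icc 0 1) :
    Tendsto (fun n : ℕ => x ^ n) atTop (𝓝 (indicator {1} 1 x)) := by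
  rcases hx.2.eq_or_lt with rfl | hlt
  · simp
  · simpa [hlt.ne] using tendsto_pow_atTop_nhds_zero_of_lt_one hx.1 hlt

lemma tendsto_integral_pow_measureReal {α : Type*} [MeasurableSpace α] {μ : Measure α}
    {φ : α → ℝ} (hφ : Integrable φ μ) (h01 : ∀ᵐ x ∂μ, φ x ∈ Icc 0 1) :
    Tendsto (fun n : ℕ => ∫ x, φ x ^ (n + 1) ∂μ) atTop (𝓝 (μ.real (φ ⁻¹' {1}))) := by
  have hmeas : NullMeasurableSet (φ ⁻¹' {1}) μ :=
    hφ.aemeasurable.nullMeasurableSet_preimage (measurableSet_singleton 1)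
  have hlimit : ∫ x, indicator {1} 1 (φ x) ∂μ = μ.real (φ ⁻¹' {1}) := by
    change ∫ x, (φ ⁻¹' {1}).indicator (fun _ => (1 : ℝ)) x ∂μ = _
    rw [integral_indicator₀ hmeas, setIntegral_const, smul_eq_mul, mul_one]
  rw [← hlimit]
  refine tendsto_integral_of_dominated_convergence φ
    (fun n => hφ.aestronglyMeasurable.pow (n + 1)) hφ (fun n => ?_) ?_
  · filter_upwards [h01] with x hx
    rw [Real.norm_of_nonneg (pow_nonneg hx.1 _)]
    exact pow_le_of_le_one hx.1 hx.2 n.succ_ne_zero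
  · filter_upwards [h01] with x hx
    exact (tendsto_pow_atTop_indicator_one hx).comp (tendsto_add_atTop_nat 1)

/-- A real test function on `U`: a smooth function whose support is compact and contained in `U`.
It is a predicate on plain functions, so that products, powers and slices need no coercions. -/
structure IsTestFunctionOn {E : Type*} [NormedAddCommGroup E] [NormedSpace ℝ E]
    (f : E → ℝ) (U : Set E) : Prop where
  contDiff : ContDiff ℝ (⊤ : ℕ∞) f
  hasCompactSupport : HasCompactSupport f
  tsupport_subset : tsupport f ⊆ U

namespace IsTestFunctionOn

variable {E F : Type*} [NormedAddCommGroup E] [NormedSpace ℝ E]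
  [NormedAddCommGroup F] [NormedSpace ℝ F] {f g : E → ℝ} {h : F → ℝ} {U : Set E} {W : Set F}

lemma integrable [MeasurableSpace E] [OpensMeasurableSpace E] {μ : Measure E}
    [IsFiniteMeasureOnCompacts μ] (hf : IsTestFunctionOn f U) : Integrable f μ :=
  hf.contDiff.continuous.integrable_of_hasCompactSupport hf.hasCompactSupport

lemma of_tsupport_subset (hf : IsTestFunctionOn f U) (hg : ContDiff ℝ (⊤ : ℕ∞) g)
    (hgf : tsupport g ⊆ tsupport f) : IsTestFunctionOn g U :=
  ⟨hg, hf.hasCompactSupport.isCompact.of_isClosed_subset (isClosed_tsupport g) hgf,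
    hgf.trans hf.tsupport_subset⟩

lemma const_mul (hf : IsTestFunctionOn f U) (c : ℝ) : IsTestFunctionOn (fun x => c * f x) U :=
  hf.of_tsupport_subset (contDiff_const.mul hf.contDiff) tsupport_mul_subset_right

lemma pow (hf : IsTestFunctionOn f U) {n : ℕ} (hn : n ≠ 0) :
    IsTestFunctionOn (fun x => f x ^ n) U :=
  hf.of_tsupport_subset (hf.contDiff.pow n) (by rw [tsupport, Function.support_pow f hn, tsupport])

lemma mul_prod (hf : IsTestFunctionOn f U) (hh : IsTestFunctionOn h W) :
    IsTestFunctionOn (fun p : E × F => f p.1 * h p.2) (U ×ˢ W) := by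
  have hsub : tsupport (fun p : E × F => f p.1 * h p.2) ⊆ tsupport f ×ˢ tsupport h :=
    subset_inter
      (tsupport_mul_subset_left.trans (tsupport_comp_subset_preimage f continuous_fst))
      (tsupport_mul_subset_right.trans (tsupport_comp_subset_preimage h continuous_snd))
  exact ⟨(hf.contDiff.comp contDiff_fst).mul (hh.contDiff.comp contDiff_snd),
    (hf.hasCompactSupport.isCompact.prod hh.hasCompactSupport.isCompact).of_isClosed_subset
      (isClosed_tsupport _) hsub,
    hsub.trans (prod_mono hf.tsupport_subset hh.tsupport_subset)⟩

end IsTestFunctionOn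

lemma exists_isTestFunctionOn_preimage_one_eq {E : Type*} [NormedAddCommGroup E]
    [NormedSpace ℝ E] [FiniteDimensional ℝ E] {K U : Set E} (hK : IsCompact K) (hU : IsOpen U)
    (hKU : K ⊆ U) :
    ∃ φ : E → ℝ, IsTestFunctionOn φ U ∧ (∀ x, φ x ∈ Icc 0 1) ∧ φ ⁻¹' {1} = K := by
  obtain ⟨L, hL, hKL, hLU⟩ := exists_compact_between hK hU hKU
  obtain ⟨φ, hφ, hrange, hsupp, hone⟩ := exists_contMDiff_support_eq_eq_one_iff (n := (⊤ : ℕ∞))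
    𝓘(ℝ, E) (isOpen_interior (s := L)) hK.isClosed hKL
  have hsub : tsupport φ ⊆ L :=
    closure_minimal (hsupp.trans_subset interior_subset) hL.isClosed
  exact ⟨φ, ⟨hφ.contDiff, hL.of_isClosed_subset (isClosed_tsupport φ) hsub, hsub.trans hLU⟩,
    fun x => hrange (mem_range_self x), Set.ext fun x => (hone x).symm⟩

/-- The test-function identity for `μ` on `V × E`: a test function `f` has the same `μ`-integral as
`χ(t) ∫ f(s, q) dν(s)`, for every test function `χ` on `V` with `∫ χ dν = 1`. In Lemma 2.1, `ν` is
Lebesgue measure on `ℝ`. -/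
def TestIdentity {E F : Type*} [NormedAddCommGroup E] [NormedSpace ℝ E] [MeasurableSpace E]
    [NormedAddCommGroup F] [NormedSpace ℝ F] [MeasurableSpace F]
    (ν : Measure F) (μ : Measure (F × E)) (V : Set F) : Prop :=
  ∀ f : F × E → ℝ, IsTestFunctionOn f (V ×ˢ univ) →
    ∀ χ : F → ℝ, IsTestFunctionOn χ V → ∫ t, χ t ∂ν = 1 →
      ∫ p, f p ∂μ = ∫ p, χ p.1 * (∫ s, f (s, p.2) ∂ν) ∂μ

namespace TestIdentity

variable {E F : Type*} [NormedAddCommGroup E] [NormedSpace ℝ E] [MeasurableSpace E]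
  [NormedAddCommGroup F] [NormedSpace ℝ F] [MeasurableSpace F]
  {ν : Measure F} {μ : Measure (F × E)} {V : Set F}

lemma integral_mul_integral_mul_prod (htest : TestIdentity ν μ V) {g ψ : F → ℝ} {h : E → ℝ}
    (hg : IsTestFunctionOn g V) (hψ : IsTestFunctionOn ψ V) (hh : IsTestFunctionOn h univ) :
    (∫ t, ψ t ∂ν) * ∫ p, g p.1 * h p.2 ∂μ = (∫ t, g t ∂ν) * ∫ p, ψ p.1 * h p.2 ∂μ := by
  wlog hψ0 : ∫ t, ψ t ∂ν ≠ 0 generalizing g ψ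
  · rcases eq_or_ne (∫ t, g t ∂ν) 0 with hg0 | hg0
    · rw [hg0, not_ne_iff.1 hψ0, zero_mul, zero_mul]
    · exact (this hψ hg hg0).symm
  have hnormalized := htest _ (hg.mul_prod hh) _ (hψ.const_mul (∫ t, ψ t ∂ν)⁻¹)
    (by rw [integral_const_mul, inv_mul_cancel₀ hψ0])
  rw [hnormalized, ← integral_const_mul, ← integral_const_mul]
  congr 1 with p
  simp only [integral_mul_const]
  field_simp

variable [FiniteDimensional ℝ E] [BorelSpace E] [FiniteDimensional ℝ F] [BorelSpace F]
  [IsFiniteMeasureOnCompacts ν] [IsFiniteMeasureOnCompacts μ]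

lemma measure_mul_measure_prod_of_isCompact (htest : TestIdentity ν μ V) (hV : IsOpen V)
    {C D : Set F} {K : Set E} (hC : IsCompact C) (hCV : C ⊆ V) (hD : IsCompact D) (hDV : D ⊆ V)
    (hK : IsCompact K) :
    ν D * μ (C ×ˢ K) = ν C * μ (D ×ˢ K) := by
  obtain ⟨g, hg, hg01, rfl⟩ := exists_isTestFunctionOn_preimage_one_eq hC hV hCV
  obtain ⟨ψ, hψ, hψ01, rfl⟩ := exists_isTestFunctionOn_preimage_one_eq hD hV hDV
  obtain ⟨h, hh, hh01, rfl⟩ := exists_isTestFunctionOn_preimage_one_eq hK isOpen_univ K.subset_univ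
  have hlim {u : F → ℝ} (hu : IsTestFunctionOn u V) (hu01 : ∀ t, u t ∈ Icc 0 1) :
      Tendsto (fun n : ℕ => ∫ t, u t ^ (n + 1) ∂ν) atTop (𝓝 (ν.real (u ⁻¹' {1}))) :=
    tendsto_integral_pow_measureReal hu.integrable (ae_of_all _ hu01)
  have hlim_prod {u : F → ℝ} (hu : IsTestFunctionOn u V) (hu01 : ∀ t, u t ∈ Icc 0 1) :
      Tendsto (fun n : ℕ => ∫ p, u p.1 ^ (n + 1) * h p.2 ^ (n + 1) ∂μ) atTop
        (𝓝 (μ.real ((u ⁻¹' {1}) ×ˢ (h ⁻¹' {1})))) := by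
    have hpre : (fun p : F × E => u p.1 * h p.2) ⁻¹' {1} = (u ⁻¹' {1}) ×ˢ (h ⁻¹' {1}) :=
      Set.ext fun p => mul_eq_one_iff_of_mem_Icc (hu01 p.1) (hh01 p.2)
    simpa only [mul_pow, hpre] using tendsto_integral_pow_measureReal (μ := μ)
      (hu.mul_prod hh).integrable
      (ae_of_all _ fun p => unitInterval.mul_mem (hu01 p.1) (hh01 p.2))
  have hreal := tendsto_nhds_unique ((hlim hψ hψ01).mul (hlim_prod hg hg01))
    (((hlim hg hg01).mul (hlim_prod hψ hψ01)).congr fun n =>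
      htest.integral_mul_integral_mul_prod (hψ.pow n.succ_ne_zero) (hg.pow n.succ_ne_zero)
        (hh.pow n.succ_ne_zero))
  refine (ENNReal.toReal_eq_toReal_iff' ?_ ?_).1
    (by simpa only [ENNReal.toReal_mul, measureReal_def] using hreal)
  · exact ENNReal.mul_ne_top hD.measure_ne_top (hC.prod hK).measure_ne_top
  · exact ENNReal.mul_ne_top hC.measure_ne_top (hD.prod hK).measure_ne_top

lemma measure_mul_measure_prod_le (htest : TestIdentity ν μ V) (hV : IsOpen V)
    {I J : Set F} {B : Set E} (hI : MeasurableSet I) (hIV : I ⊆ V) (hJ : MeasurableSet J)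
    (hJV : J ⊆ V) (hB : MeasurableSet B) :
    ν J * μ (I ×ˢ B) ≤ ν I * μ (J ×ˢ B) := by
  rw [hJ.measure_eq_iSup_isCompact ν, (hI.prod hB).measure_eq_iSup_isCompact μ]
  simp only [ENNReal.iSup_mul, ENNReal.mul_iSup, iSup_le_iff]
  intro L hLIB hL D hDJ hD
  have hCI : Prod.fst '' L ⊆ I := image_subset_iff.2 fun p hp => (hLIB hp).1
  have hKB : Prod.snd '' L ⊆ B := image_subset_iff.2 fun p hp => (hLIB hp).2
  calc ν D * μ L ≤ ν D * μ ((Prod.fst '' L) ×ˢ (Prod.snd '' L)) := by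
        gcongr
        exact subset_fst_image_prod_snd_image
    _ = ν (Prod.fst '' L) * μ (D ×ˢ (Prod.snd '' L)) :=
        htest.measure_mul_measure_prod_of_isCompact hV (hL.image continuous_fst)
          (hCI.trans hIV) hD (hDJ.trans hJV) (hL.image continuous_snd)
    _ ≤ ν I * μ (J ×ˢ B) := by gcongr

end TestIdentity

theorem measure_of_rectangles_from_test_identity_general {E F : Type*}
    [NormedAddCommGroup E] [NormedSpace ℝ E] [FiniteDimensional ℝ E]
    [MeasurableSpace E] [BorelSpace E]
    [NormedAddCommGroup F] [NormedSpace ℝ F] [FiniteDimensional ℝ F]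
    [MeasurableSpace F] [BorelSpace F]
    {ν : Measure F} [IsFiniteMeasureOnCompacts ν]
    {μ : Measure (F × E)} [IsFiniteMeasureOnCompacts μ]
    {V : Set F} (hV : IsOpen V) (htest : TestIdentity ν μ V)
    {I J : Set F} {B : Set E} (hI : MeasurableSet I) (hIV : I ⊆ V) (hJ : MeasurableSet J)
    (hJV : J ⊆ V) (hB : MeasurableSet B) :
    ν J * μ (I ×ˢ B) = ν I * μ (J ×ˢ B) :=
  (htest.measure_mul_measure_prod_le hV hI hIV hJ hJV hB).antisymm
    (htest.measure_mul_measure_prod_le hV hJ hJV hI hIV hB)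

/-- Passage from the test-function identity to measures of rectangles in the proof of
Lemma 2.1: if testing against any test function equals testing against `χ(t)` times its
`t`-average, then the measure of a rectangle `[a,b] × B` is
`(b-a) (2ε)⁻¹ μ([-ε,ε] × B)`. -/
theorem measure_of_rectangles_from_test_identity
    (d : ℕ) (hd : 1 ≤ d) (ε : ℝ) (hε : 0 < ε)
    (μ : Measure (ℝ × (Fin d → ℝ))) [IsFiniteMeasure μ]
    (hconc : μ ((Set.Ioo (-(2*ε)) (2*ε))ᶜ ×ˢ (Set.univ : Set (Fin d → ℝ))) = 0)
    (htest : ∀ f : ℝ × (Fin d → ℝ) → ℝ, ContDiff ℝ (⊤ : ℕ∞) f → HasCompactSupport f →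
      tsupport f ⊆ Set.Ioo (-(2*ε)) (2*ε) ×ˢ Set.univ →
      ∀ χ : ℝ → ℝ, ContDiff ℝ (⊤ : ℕ∞) χ → HasCompactSupport χ →
        tsupport χ ⊆ Set.Ioo (-(2*ε)) (2*ε) → (∫ t, χ t) = 1 →
        ∫ p, f p ∂μ = ∫ p, χ p.1 * (∫ s, f (s, p.2)) ∂μ) :
    ∀ a b : ℝ, -(2*ε) < a → a ≤ b → b < 2*ε →
      ∀ B : Set (Fin d → ℝ), MeasurableSet B →
        μ (Set.Icc a b ×ˢ B)
          = ENNReal.ofReal (b - a) * (ENNReal.ofReal (2*ε))⁻¹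
              * μ (Set.Icc (-ε) ε ×ˢ B) := by
  intro a b ha _ hb B hB
  have hscaled : ENNReal.ofReal (2 * ε) * μ (Icc a b ×ˢ B)
      = ENNReal.ofReal (b - a) * μ (Icc (-ε) ε ×ˢ B) := by
    have hidentity : TestIdentity volume μ (Ioo (-(2 * ε)) (2 * ε)) := fun f hf χ hχ =>
      htest f hf.contDiff hf.hasCompactSupport hf.tsupport_subset
        χ hχ.contDiff hχ.hasCompactSupport hχ.tsupport_subset
    have hrect := measure_of_rectangles_from_test_identity_general isOpen_Ioo hidentity
      (measurableSet_Icc (a := a) (b := b)) (Icc_subset_Ioo ha hb)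
      (measurableSet_Icc (a := -ε) (b := ε)) (Icc_subset_Ioo (by linarith) (by linarith)) hB
    rwa [Real.volume_Icc, Real.volume_Icc, sub_neg_eq_add, ← two_mul] at hrect
  have hlength : ENNReal.ofReal (2 * ε) ≠ 0 := by simpa using hε
  rw [mul_right_comm, ← hscaled, mul_comm (ENNReal.ofReal _),
    ENNReal.mul_inv_cancel_right hlength ENNReal.ofReal_ne_top]
end

section
/- Let N be a topological space equipped with its Borel σ-algebra, let φ : ℝ × N → N be a continuous flow (φ(0,x) = x and φ(t, φ(s,x)) = φ(t+s, x) for all t,s ∈ ℝ, x ∈ N), and let μ be a finite Borel measure on N invariant under the flow, i.e. the pushforward of μ under φ(t,·) equals μ for every t ∈ ℝ. Let Σ be a measurable space, ε > 0, j : Σ → N a measurable map, and define ι : ℝ × Σ → N by ι(t,q) = φ(t, j(q)). Assume that the restriction of ι to (−2ε, 2ε) × Σ is a measurable embedding (injective, measurable, and mapping measurable sets to Borel-measurable sets). Then for every measurable set B ⊆ Σ and every t with 0 < t ≤ ε, μ( ⋃_{s ∈ [−t, t)} φ(s, j(B)) ) = 2t · μ_Σ(B), where μ_Σ(B) := (2ε)^{−1}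 μ(ι([−ε,ε) × B)). In particular, the quantity (2t)^{−1} μ( ⋃_{s ∈ [−t,t)} φ(s, j(B)) ) is independent of t ∈ (0, ε]. -/
open MeasureTheory Set

/-!
Fix the starting time `a`. By invariance, the measure `f l` of the set swept out by `E` during
`[a, a + l)` does not depend on `a`; since the translates of `E` are disjoint up to time `L`, this
makes `f` additive on `(0, L]`. An additive function with values in `[0, ∞]` is monotone, hence
proportional to the length `l`, and both sides of the claim are values of `f`.
-/

/-- `f` is additive on `(0, L]`. Only positive summands are used, so that nothing is asked of
`f 0`, which for values in `ℝ≥0∞` could be `∞`. -/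
def AdditiveOnIoc {G M : Type*} [AddMonoid G] [Preorder G] [Add M] (f : G → M) (L : G) : Prop :=
  ∀ ⦃a b⦄, 0 < a → 0 < b → a + b ≤ L → f (a + b) = f a + f b

namespace AdditiveOnIoc

open scoped ENNReal

lemma monotoneOn {G M : Type*} [AddCommGroup G] [PartialOrder G] [IsOrderedAddMonoid G]
    [Add M] [Preorder M] [CanonicallyOrderedAdd M] {f : G → M} {L : G}
    (hf : AdditiveOnIoc f L) : MonotoneOn f (Ioc 0 L) := by
  intro x hx y hy hxy
  obtain rfl | hlt := hxy.eq_or_lt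
  · exact le_rfl
  · calc f x ≤ f x + f (y - x) := le_self_add
      _ = f (x + (y - x)) := (hf hx.1 (sub_pos.2 hlt) (by simpa using hy.2)).symm
      _ = f y := by rw [add_sub_cancel]

lemma map_nsmul {G M : Type*} [AddMonoid G] [Preorder G] [AddLeftMono G] [AddMonoid M]
    {f : G → M} {L x : G} (hf : AdditiveOnIoc f L) (hx : 0 < x) {n : ℕ} (hn : n ≠ 0)
    (hnx : n • x ≤ L) : f (n • x) = n • f x := by
  induction n, Nat.pos_of_ne_zero hn using Nat.le_induction with
  | base => simp only [one_nsmul]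
  | succ n hpos ih =>
    have hn : n ≠ 0 := Nat.ne_of_gt hpos
    rw [succ_nsmul] at hnx
    rw [succ_nsmul, succ_nsmul, hf (nsmul_pos hx hn) hx hnx,
      ih hn ((le_add_of_nonneg_right hx.le).trans hnx)]

lemma nsmul_le_nsmul {K M : Type*} [Field K] [LinearOrder K] [IsStrictOrderedRing K]
    [AddCommMonoid M] [Preorder M] [CanonicallyOrderedAdd M]
    {f : K → M} {L x y : K} (hf : AdditiveOnIoc f L) (hx : x ∈ Ioc 0 L) (hy : y ∈ Ioc 0 L)
    {m n : ℕ} (hm : m ≠ 0) (hn : n ≠ 0) (h : n * x ≤ m * y) : n • f x ≤ m • f y := by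
  have map_div {z : K} (hz : z ∈ Ioc 0 L) {k : ℕ} (hk : k ≠ 0) : f z = k • f (z / k) := by
    have hkz : k • (z / k) = z := by rw [nsmul_eq_mul, mul_div_cancel₀ z (mod_cast hk)]
    rw [← hf.map_nsmul (by have := hz.1; positivity) hk (hkz.trans_le hz.2), hkz]
  have div_mem {z : K} (hz : z ∈ Ioc 0 L) {k : ℕ} (hk : k ≠ 0) : z / k ∈ Ioc 0 L :=
    ⟨by have := hz.1; positivity,
      (div_le_self hz.1.le (mod_cast Nat.one_le_iff_ne_zero.2 hk)).trans hz.2⟩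
  have hdiv : x / m ≤ y / n := by
    rw [div_le_div_iff₀ (by positivity) (by positivity)]
    linarith
  calc n • f x = n • m • f (x / m) := by rw [map_div hx hm]
    _ ≤ n • m • f (y / n) := by gcongr; exact hf.monotoneOn (div_mem hx hm) (div_mem hy hn) hdiv
    _ = m • n • f (y / n) := nsmul_left_comm _ _ _
    _ = m • f y := by rw [← map_div hy hn]

variable {f : ℝ → ℝ≥0∞} {L x y : ℝ}

lemma le_ofReal_div_mul (hf : AdditiveOnIoc f L) (hx : x ∈ Ioc 0 L) (hy : y ∈ Ioc 0 L) :
    f x ≤ ENNReal.ofReal (x / y) * f y := by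
  have hxy : 0 < x / y := div_pos hx.1 hy.1
  have hlim : Filter.Tendsto (fun n : ℕ => ENNReal.ofReal (⌈x / y * n⌉₊ / n) * f y) Filter.atTop
      (nhds (ENNReal.ofReal (x / y) * f y)) :=
    ENNReal.Tendsto.mul_const
      (ENNReal.tendsto_ofReal
        ((tendsto_nat_ceil_mul_div_atTop hxy.le).comp tendsto_natCast_atTop_atTop))
      (.inl (ENNReal.ofReal_pos.2 hxy).ne')
  refine ge_of_tendsto hlim ?_
  filter_upwards [Filter.eventually_gt_atTop 0] with n hn
  have hn' : (0 : ℝ) < n := mod_cast hn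
  have hceil : n * x ≤ ⌈x / y * n⌉₊ * y := by
    rw [← div_le_iff₀ hy.1]
    exact (by ring : (n * x / y : ℝ) = x / y * n).trans_le (Nat.le_ceil _)
  have hle := hf.nsmul_le_nsmul hx hy (Nat.ceil_pos.2 (by positivity)).ne' hn.ne' hceil
  rw [nsmul_eq_mul, nsmul_eq_mul] at hle
  rw [ENNReal.ofReal_div_of_pos hn', ENNReal.ofReal_natCast, ENNReal.ofReal_natCast,
    ← ENNReal.mul_div_right_comm]
  rwa [ENNReal.le_div_iff_mul_le (by simp [hn.ne']) (by simp), mul_comm]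

theorem eq_ofReal_div_mul (hf : AdditiveOnIoc f L) (hx : x ∈ Ioc 0 L) (hy : y ∈ Ioc 0 L) :
    f x = ENNReal.ofReal (x / y) * f y := by
  refine (hf.le_ofReal_div_mul hx hy).antisymm ?_
  calc ENNReal.ofReal (x / y) * f y
      ≤ ENNReal.ofReal (x / y) * (ENNReal.ofReal (y / x) * f x) := by
        gcongr
        exact hf.le_ofReal_div_mul hy hx
    _ = f x := by
        rw [← mul_assoc, ← ENNReal.ofReal_mul (div_nonneg hx.1.le hy.1.le),
          div_mul_div_cancel₀ hy.1.ne', div_self hx.1.ne', ENNReal.ofReal_one, one_mul]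

end AdditiveOnIoc

open scoped Pointwise

lemma biUnion_image_vadd {G N Z : Type*} [VAdd G N] (S : Set G) (j : Z → N) (B : Set Z) :
    ⋃ s ∈ S, (fun q => s +ᵥ j q) '' B = S +ᵥ j '' B := by
  simp only [← iUnion_vadd_set, ← image_vadd, image_image]

lemma image_prod_vadd {G N Z : Type*} [VAdd G N] (S : Set G) (j : Z → N) (B : Set Z) :
    (fun p : G × Z => p.1 +ᵥ j p.2) '' S ×ˢ B = S +ᵥ j '' B := by
  rw [image_prod (fun s q => s +ᵥ j q), ← image2_vadd, image2_image_right]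

lemma disjoint_vadd_of_pairwiseDisjoint {G N : Type*} [VAdd G N] {R S T : Set G} {E : Set N}
    (hR : R.PairwiseDisjoint (· +ᵥ E)) (hS : S ⊆ R) (hT : T ⊆ R) (hST : Disjoint S T) :
    Disjoint (S +ᵥ E) (T +ᵥ E) := by
  simp only [← iUnion_vadd_set, disjoint_iUnion₂_left, disjoint_iUnion₂_right]
  exact fun t ht s hs => hR (hS hs) (hT ht) (hST.ne_of_mem hs ht)

lemma pairwiseDisjoint_image_of_injOn_prod {α β γ : Type*} {f : α × β → γ} {S : Set α} {B : Set β}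
    (hf : InjOn f (S ×ˢ B)) : S.PairwiseDisjoint fun s => (fun q => f (s, q)) '' B := by
  intro s hs t ht hst
  refine disjoint_left.2 ?_
  rintro _ ⟨q, hq, rfl⟩ ⟨r, hr, h⟩
  exact hst (congrArg Prod.fst (hf ⟨ht, hr⟩ ⟨hs, hq⟩ h)).symm

lemma measure_Ico_add_left_vadd {G N : Type*} [AddCommGroup G] [PartialOrder G]
    [IsOrderedAddMonoid G] [AddAction G N] [MeasurableSpace N] (μ : Measure N)
    [VAddInvariantMeasure G N μ] (a b c : G) (E : Set N) :
    μ (Ico (c + a) (c + b) +ᵥ E) = μ (Ico a b +ᵥ E) := by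
  have hIco : Ico (c + a) (c + b) = c +ᵥ Ico a b := (image_const_add_Ico c a b).symm
  rw [hIco, vadd_assoc, measure_vadd]

lemma additiveOnIoc_measure_Ico_vadd {G N : Type*} [AddCommGroup G] [LinearOrder G]
    [IsOrderedAddMonoid G] [AddAction G N] [MeasurableSpace N] (μ : Measure N)
    [VAddInvariantMeasure G N μ] {E : Set N} {a L : G}
    (hdisj : (Ico a (a + L)).PairwiseDisjoint (· +ᵥ E))
    (hmeas : ∀ l ∈ Ioo 0 L, MeasurableSet (Ico a (a + l) +ᵥ E)) :
    AdditiveOnIoc (fun l => μ (Ico a (a + l) +ᵥ E)) L := by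
  intro l m hl hm hlm
  have hlL : l < L := (lt_add_of_pos_right l hm).trans_le hlm
  have hsplit : Ico a (a + l) ∪ Ico (a + l) (a + (l + m)) = Ico a (a + (l + m)) :=
    Ico_union_Ico_eq_Ico (by simpa using hl.le) (by simpa using hm.le)
  have hpieces : Disjoint (Ico a (a + l) +ᵥ E) (Ico (a + l) (a + (l + m)) +ᵥ E) :=
    disjoint_vadd_of_pairwiseDisjoint hdisj (Ico_subset_Ico_right (by gcongr))
      (Ico_subset_Ico (by simpa using hl.le) (by gcongr))
      (Ico_disjoint_Ico_same)
  calc μ (Ico a (a + (l + m)) +ᵥ E)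
      = μ (Ico a (a + l) +ᵥ E) + μ (Ico (a + l) (a + (l + m)) +ᵥ E) := by
        rw [← hsplit, union_vadd, measure_union' hpieces (hmeas l ⟨hl, hlL⟩)]
    _ = μ (Ico a (a + l) +ᵥ E) + μ (Ico a (a + m) +ᵥ E) := by
        rw [← measure_Ico_add_left_vadd μ a (a + m) l E, add_comm l a, add_left_comm l a m]

theorem transversal_measure_eq_flow_tube_general {N : Type*} [MeasurableSpace N]
    (φ : ℝ × N → N) (hφ : ∀ t, Measurable fun x => φ (t, x))
    (hφ0 : ∀ x, φ (0, x) = x) (hφadd : ∀ t s x, φ (t, φ (s, x)) = φ (t + s, x))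
    (μ : Measure N) (hinv : ∀ t : ℝ, Measure.map (fun x => φ (t, x)) μ = μ)
    {Z : Type*} {ε : ℝ} (j : Z → N) (ι : ℝ × Z → N) (hι : ∀ t q, ι (t, q) = φ (t, j q))
    {B : Set Z} (hdisj : (Ico (-ε) ε).PairwiseDisjoint fun s => (fun q => ι (s, q)) '' B)
    (himage : ∀ s ∈ Ioo (-ε) ε, MeasurableSet (ι '' (Ico (-ε) s ×ˢ B)))
    {t : ℝ} (ht : 0 < t) (htε : t ≤ ε) :
    μ (⋃ s ∈ Ico (-t) t, (fun q => φ (s, j q)) '' B)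
      = ENNReal.ofReal (2 * t) * ((ENNReal.ofReal (2 * ε))⁻¹ * μ (ι '' (Ico (-ε) ε ×ˢ B))) := by
  let _ : AddAction ℝ N :=
    { vadd s x := φ (s, x), zero_vadd := hφ0, add_vadd s r x := (hφadd s r x).symm }
  have : VAddInvariantMeasure ℝ N μ :=
    ⟨fun c A hA => (Measure.map_apply (hφ c) hA).symm.trans (by rw [hinv])⟩
  obtain rfl : ι = fun p => p.1 +ᵥ j p.2 := funext fun p => hι p.1 p.2
  have hε : 0 < 2 * ε := by linarith
  have hadd : AdditiveOnIoc (fun l => μ (Ico (-ε) (-ε + l) +ᵥ j '' B)) (2 * ε) := by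
    refine additiveOnIoc_measure_Ico_vadd μ ?_ fun l hl => ?_
    · simpa only [← image_vadd, image_image, two_mul, neg_add_cancel_left] using hdisj
    · rw [← image_prod_vadd]
      exact himage _ ⟨by linarith [hl.1], by linarith [hl.2]⟩
  calc μ (⋃ s ∈ Ico (-t) t, (fun q => s +ᵥ j q) '' B)
      = μ (Ico (-ε) (-ε + 2 * t) +ᵥ j '' B) := by
        rw [biUnion_image_vadd, ← measure_Ico_add_left_vadd μ (-t) t (t - ε)]
        congr 3 <;> ring
    _ = ENNReal.ofReal (2 * t / (2 * ε)) * μ (Ico (-ε) (-ε + 2 * ε) +ᵥ j '' B) :=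
        hadd.eq_ofReal_div_mul ⟨by linarith, by linarith⟩ ⟨hε, le_rfl⟩
    _ = _ := by
        rw [ENNReal.ofReal_div_of_pos hε, div_eq_mul_inv, mul_assoc, image_prod_vadd, two_mul ε,
          neg_add_cancel_left]

/-- Remark 2.4 (flow-box picture): the transversal measure of a set `B` equals
`(2t)⁻¹` times the `μ`-measure of the union of the flow translates of `B` for times in
`[-t,t)`, independently of `t ∈ (0, ε]`. -/
theorem transversal_measure_eq_flow_tube
    {N : Type*} [TopologicalSpace N] [MeasurableSpace N] [BorelSpace N]
    (φ : ℝ × N → N) (hφcont : Continuous φ)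
    (hφ0 : ∀ x, φ (0, x) = x)
    (hφadd : ∀ t s x, φ (t, φ (s, x)) = φ (t + s, x))
    (μ : Measure N) [IsFiniteMeasure μ]
    (hinv : ∀ t : ℝ, Measure.map (fun x => φ (t, x)) μ = μ)
    {Z : Type*} [MeasurableSpace Z] (ε : ℝ) (hε : 0 < ε)
    (j : Z → N) (hj : Measurable j)
    (ι : ℝ × Z → N) (hι : ∀ t q, ι (t, q) = φ (t, j q))
    (hinj : Set.InjOn ι (Set.Ioo (-(2*ε)) (2*ε) ×ˢ (Set.univ : Set Z)))
    (hmeas : Measurable ι)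
    (himage : ∀ A : Set (ℝ × Z), A ⊆ Set.Ioo (-(2*ε)) (2*ε) ×ˢ Set.univ →
      MeasurableSet A → MeasurableSet (ι '' A)) :
    ∀ B : Set Z, MeasurableSet B → ∀ t : ℝ, 0 < t → t ≤ ε →
      μ (⋃ s ∈ Set.Ico (-t) t, (fun q => φ (s, j q)) '' B)
        = ENNReal.ofReal (2*t)
            * ((ENNReal.ofReal (2*ε))⁻¹ * μ (ι '' (Set.Ico (-ε) ε ×ˢ B))) := by
  intro B hB t ht htε
  have hbox {s : ℝ} (hs : s ≤ ε) : Ico (-ε) s ×ˢ B ⊆ Ioo (-(2*ε)) (2*ε) ×ˢ univ :=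
    prod_mono (fun r hr => ⟨by linarith [hr.1], by linarith [hr.2]⟩) (subset_univ B)
  exact transversal_measure_eq_flow_tube_general φ (fun _ => by fun_prop) hφ0 hφadd μ hinv j ι hι
    (pairwiseDisjoint_image_of_injOn_prod (hinj.mono (hbox le_rfl)))
    (fun s hs => himage _ (hbox hs.2.le) (measurableSet_Ico.prod hB)) ht htε
end

section
/- Let m ≥ 1, δ > 0, R > 0, and 0 < ε' < 1. Let b : ℝ^m → ℂ be smooth and compactly supported with support contained in {ξ : |ξ| ≥ δ}, and for each h ∈ (0,1] let g_h : ℝ^m → ℂ be a smooth function supported in the closed ball of radius R centered at 0 such that for every n ∈ ℕ there is a constant C_n (independent of h) with sup_{y ∈ ℝ^m} ‖D^n g_h(y)‖ ≤ C_n h^{−n(1−ε')} for all h ∈ (0,1], where D^n denotes the n-th total (Fréchet) derivative. Then for every N ∈ ℕ there exists C > 0 such that for all h ∈ (0,1] and all x ∈ ℝ^m, | ∫_{ℝ^m} ∫_{ℝ^m} e^{(i/h)⟨x−y, ξ⟩} b(ξ) g_h(y) dy dξ | ≤ C h^N. -/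
open MeasureTheory Set
open scoped RealInnerProductSpace

/-!
The inner integral is, up to a unimodular factor, the Fourier transform of `g_h` at
`w = ξ / (2πh)`. Integrating by parts `n` times gives `(2π‖w‖)^n ‖𝓕 f w‖ ≤ ∫ ‖D^n f‖`, that is, a
gain of `(h / ‖ξ‖)^n ≤ (h / δ)^n` on the support of `b`. Since `∫ ‖D^n g_h‖` only loses
`h^{-n(1-ε')}`, the double integral is `O(h^{nε'})` uniformly in `x`, and `n` is arbitrary.
-/

section Support

variable {𝕜 E F : Type*} [NontriviallyNormedField 𝕜] [NormedAddCommGroup E] [NormedSpace 𝕜 E]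
  [MeasurableSpace E] [NormedAddCommGroup F] [NormedSpace 𝕜 F] {μ : Measure E}

lemma integral_norm_iteratedFDeriv_le_of_support_subset {n : ℕ} {f : E → F} {s : Set E} {C : ℝ}
    (hs : IsClosed s) (hμs : μ s < ⊤) (hf : Function.support f ⊆ s)
    (hC : ∀ y, ‖iteratedFDeriv 𝕜 n f y‖ ≤ C) :
    ∫ y, ‖iteratedFDeriv 𝕜 n f y‖ ∂μ ≤ C * μ.real s := by
  have hvanish : ∀ y ∉ s, ‖iteratedFDeriv 𝕜 n f y‖ = 0 := fun y hy ↦ by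
    contrapose! hy
    exact closure_minimal hf hs (support_iteratedFDeriv_subset n (norm_ne_zero_iff.1 hy))
  rw [← setIntegral_eq_integral_of_forall_compl_eq_zero hvanish]
  exact (Real.le_norm_self _).trans
    (norm_setIntegral_le_of_norm_le_const hμs fun y _ ↦ (norm_norm _).trans_le (hC y))

end Support

section Fourier

open scoped FourierTransform

variable {E F : Type*} [NormedAddCommGroup E] [InnerProductSpace ℝ E] [FiniteDimensional ℝ E]
  [MeasurableSpace E] [BorelSpace E] [NormedAddCommGroup F] [NormedSpace ℂ F]

theorem pow_mul_norm_fourier_le_integral_norm_iteratedFDeriv {n : ℕ} {f : E → F}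
    (hf : ContDiff ℝ n f) (hint : ∀ k ≤ n, Integrable (iteratedFDeriv ℝ k f)) (w : E) :
    (2 * Real.pi * ‖w‖) ^ n * ‖𝓕 f w‖ ≤ ∫ y, ‖iteratedFDeriv ℝ n f y‖ := by
  by_cases hw : ‖w‖ ^ n = 0
  · rw [mul_pow, hw, mul_zero, zero_mul]
    exact integral_nonneg fun _ ↦ norm_nonneg _
  have hself : (-innerSL ℝ : E →L[ℝ] E →L[ℝ] ℝ) w w = -‖w‖ ^ 2 :=
    congrArg Neg.neg (real_inner_self_eq_norm_sq w)
  -- Only the component of `𝓕 (D^n f) w` along `(w, …, w)` is needed.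
  have hdiag : ‖𝓕 (iteratedFDeriv ℝ n f) w (fun _ ↦ w)‖ =
      (2 * Real.pi * ‖w‖) ^ n * ‖𝓕 f w‖ * ‖w‖ ^ n := by
    rw [Real.fourier_iteratedFDeriv (N := n) (by exact_mod_cast hf)
      (fun k hk ↦ hint k (by exact_mod_cast hk)) le_rfl,
      VectorFourier.fourierPowSMulRight_apply, hself]
    simp only [norm_smul, norm_pow, norm_neg, norm_mul, Complex.norm_I, Complex.norm_real,
      Complex.norm_ofNat, Real.norm_of_nonneg Real.pi_pos.le, Finset.prod_const, Finset.card_univ,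
      Fintype.card_fin, norm_norm]
    ring
  have hle : ‖𝓕 (iteratedFDeriv ℝ n f) w‖ ≤ ∫ y, ‖iteratedFDeriv ℝ n f y‖ :=
    VectorFourier.norm_fourierIntegral_le_integral_norm _ _ _ _ _
  refine le_of_mul_le_mul_right ?_ ((pow_nonneg (norm_nonneg w) n).lt_of_ne' hw)
  calc (2 * Real.pi * ‖w‖) ^ n * ‖𝓕 f w‖ * ‖w‖ ^ n
      = ‖𝓕 (iteratedFDeriv ℝ n f) w (fun _ ↦ w)‖ := hdiag.symm
    _ ≤ ‖𝓕 (iteratedFDeriv ℝ n f) w‖ * ‖w‖ ^ n := by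
        simpa using (𝓕 (iteratedFDeriv ℝ n f) w).le_opNorm fun _ ↦ w
    _ ≤ (∫ y, ‖iteratedFDeriv ℝ n f y‖) * ‖w‖ ^ n := by gcongr

lemma integral_exp_inner_sub_div_smul_eq_fourier (f : E → F) (h : ℝ) (x ξ : E) :
    ∫ y, Complex.exp (Complex.I * Complex.ofReal (⟪x - y, ξ⟫ / h)) • f y =
      Complex.exp (Complex.ofReal (⟪x, ξ⟫ / h) * Complex.I) • 𝓕 f ((2 * Real.pi * h)⁻¹ • ξ) := by
  rw [Real.fourier_eq', ← integral_smul]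
  congr with y
  have hphase : -2 * Real.pi * ⟪y, (2 * Real.pi * h)⁻¹ • ξ⟫ = -(⟪y, ξ⟫ / h) := by
    rw [real_inner_smul_right]
    field_simp
  rw [hphase, smul_smul, ← Complex.exp_add, inner_sub_left, ← add_mul, ← Complex.ofReal_add,
    sub_div, sub_eq_add_neg, mul_comm]

theorem norm_integral_exp_inner_sub_div_smul_le {n : ℕ} {f : E → F} (hf : ContDiff ℝ n f)
    (hint : ∀ k ≤ n, Integrable (iteratedFDeriv ℝ k f)) {h : ℝ} (hh : 0 < h) (x : E) {ξ : E}
    (hξ : ξ ≠ 0) :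
    ‖∫ y, Complex.exp (Complex.I * Complex.ofReal (⟪x - y, ξ⟫ / h)) • f y‖ ≤
      (h / ‖ξ‖) ^ n * ∫ y, ‖iteratedFDeriv ℝ n f y‖ := by
  have hw : 2 * Real.pi * ‖(2 * Real.pi * h)⁻¹ • ξ‖ = ‖ξ‖ / h := by
    rw [norm_smul, Real.norm_of_nonneg (by positivity)]
    field_simp
  have hdecay := pow_mul_norm_fourier_le_integral_norm_iteratedFDeriv hf hint
    ((2 * Real.pi * h)⁻¹ • ξ)
  have hpos : 0 < ‖ξ‖ / h := div_pos (norm_pos_iff.2 hξ) hh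
  rw [integral_exp_inner_sub_div_smul_eq_fourier, norm_smul, Complex.norm_exp_ofReal_mul_I,
    one_mul, ← inv_div, inv_pow, inv_mul_eq_div, le_div_iff₀' (pow_pos hpos n), ← hw]
  exact hdecay

theorem norm_integral_integral_exp_inner_sub_div_smul_le {n : ℕ} {f : E → F} {b : E → ℂ} {δ h : ℝ}
    (hδ : 0 < δ) (hb : Integrable b) (hbsupp : Function.support b ⊆ {ξ | δ ≤ ‖ξ‖})
    (hf : ContDiff ℝ n f) (hint : ∀ k ≤ n, Integrable (iteratedFDeriv ℝ k f)) (hh : 0 < h) (x : E) :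
    ‖∫ ξ, ∫ y, Complex.exp (Complex.I * Complex.ofReal (⟪x - y, ξ⟫ / h)) • b ξ • f y‖ ≤
      (h / δ) ^ n * (∫ ξ, ‖b ξ‖) * ∫ y, ‖iteratedFDeriv ℝ n f y‖ := by
  have hinner (ξ : E) :
      ‖∫ y, Complex.exp (Complex.I * Complex.ofReal (⟪x - y, ξ⟫ / h)) • b ξ • f y‖ ≤
        ‖b ξ‖ * ((h / δ) ^ n * ∫ y, ‖iteratedFDeriv ℝ n f y‖) := by
    by_cases hbξ : b ξ = 0
    · simp [hbξ]
    have hδξ : δ ≤ ‖ξ‖ := hbsupp hbξ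
    simp only [smul_comm _ (b ξ)]
    rw [integral_smul, norm_smul]
    gcongr
    refine (norm_integral_exp_inner_sub_div_smul_le hf hint hh x
      (norm_pos_iff.1 (hδ.trans_le hδξ))).trans ?_
    gcongr
  calc _ ≤ ∫ ξ, ‖b ξ‖ * ((h / δ) ^ n * ∫ y, ‖iteratedFDeriv ℝ n f y‖) :=
        norm_integral_le_of_norm_le (hb.norm.mul_const _) (.of_forall hinner)
    _ = (h / δ) ^ n * (∫ ξ, ‖b ξ‖) * ∫ y, ‖iteratedFDeriv ℝ n f y‖ := by
        rw [integral_mul_const]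
        ring

end Fourier

theorem nonstationary_phase_rough_amplitude_general
    {E F : Type*} [NormedAddCommGroup E] [InnerProductSpace ℝ E] [FiniteDimensional ℝ E]
    [MeasurableSpace E] [BorelSpace E] [NormedAddCommGroup F] [NormedSpace ℂ F] [CompleteSpace F]
    {δ ε' : ℝ} (hδ : 0 < δ) (hε' : 0 < ε')
    {b : E → ℂ} (hb : Integrable b) (hbsupp : Function.support b ⊆ {ξ | δ ≤ ‖ξ‖})
    {g : ℝ → E → F} (hg : ∀ h ∈ Ioc (0 : ℝ) 1, ContDiff ℝ (⊤ : ℕ∞) (g h))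
    (hgint : ∀ h ∈ Ioc (0 : ℝ) 1, ∀ n : ℕ, Integrable (iteratedFDeriv ℝ n (g h)))
    (hgder : ∀ n : ℕ, ∃ C : ℝ, ∀ h ∈ Ioc (0 : ℝ) 1,
      ∫ y, ‖iteratedFDeriv ℝ n (g h) y‖ ≤ C * h ^ (-((n : ℝ) * (1 - ε')))) (N : ℕ) :
    ∃ C > 0, ∀ h ∈ Ioc (0 : ℝ) 1, ∀ x : E,
      ‖∫ ξ, ∫ y, Complex.exp (Complex.I * Complex.ofReal (⟪x - y, ξ⟫ / h)) • b ξ • g h y‖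
        ≤ C * h ^ N := by
  obtain ⟨n, hn⟩ := exists_nat_ge (N / ε')
  have hNn : (N : ℝ) ≤ n * ε' := (div_le_iff₀ hε').1 hn
  obtain ⟨C, hC⟩ := hgder n
  have hC0 : 0 ≤ C := by
    simpa using (integral_nonneg fun _ ↦ norm_nonneg _).trans (hC 1 ⟨one_pos, le_rfl⟩)
  set B := ∫ ξ, ‖b ξ‖
  refine ⟨B * C / δ ^ n + 1, by positivity, fun h hh x ↦ ?_⟩
  have h0 : 0 < h := hh.1
  have hgain : h ^ n * h ^ (-((n : ℝ) * (1 - ε'))) ≤ h ^ N := by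
    rw [← Real.rpow_natCast h n, ← Real.rpow_add h0, ← Real.rpow_natCast h N]
    exact Real.rpow_le_rpow_of_exponent_ge h0 hh.2 (by linarith)
  calc _ ≤ (h / δ) ^ n * B * ∫ y, ‖iteratedFDeriv ℝ n (g h) y‖ :=
        norm_integral_integral_exp_inner_sub_div_smul_le hδ hb hbsupp
          ((hg h hh).of_le (by exact_mod_cast le_top)) (fun k _ ↦ hgint h hh k) h0 x
    _ ≤ (h / δ) ^ n * B * (C * h ^ (-((n : ℝ) * (1 - ε')))) := by gcongr; exact hC h hh
    _ = B * C / δ ^ n * (h ^ n * h ^ (-((n : ℝ) * (1 - ε')))) := by ring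
    _ ≤ B * C / δ ^ n * h ^ N := by gcongr
    _ ≤ (B * C / δ ^ n + 1) * h ^ N := by gcongr; linarith

/-- Oscillatory integral estimate (e:awayEst) in the proof of Lemma 4.1: with a frequency
cutoff `b` supported in `{|ξ| ≥ δ}` and an `h`-dependent rough amplitude `g_h` whose
`n`-th derivatives grow at most like `h^{-n(1-ε')}`, the oscillatory integral
`∫∫ e^{(i/h)⟨x-y,ξ⟩} b(ξ) g_h(y) dy dξ` is `O(h^∞)` uniformly in `x`. -/
theorem nonstationary_phase_rough_amplitude
    (m : ℕ) (hm : 1 ≤ m) (δ R ε' : ℝ) (hδ : 0 < δ) (hR : 0 < R)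
    (hε'0 : 0 < ε') (hε'1 : ε' < 1)
    (b : EuclideanSpace ℝ (Fin m) → ℂ) (hb : ContDiff ℝ (⊤ : ℕ∞) b) (hbc : HasCompactSupport b)
    (hbsupp : Function.support b ⊆ {ξ | δ ≤ ‖ξ‖})
    (g : ℝ → EuclideanSpace ℝ (Fin m) → ℂ)
    (hg : ∀ h ∈ Set.Ioc (0:ℝ) 1, ContDiff ℝ (⊤ : ℕ∞) (g h))
    (hgsupp : ∀ h ∈ Set.Ioc (0:ℝ) 1, Function.support (g h) ⊆ Metric.closedBall 0 R)
    (hgder : ∀ n : ℕ, ∃ C : ℝ, ∀ h ∈ Set.Ioc (0:ℝ) 1, ∀ y,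
      ‖iteratedFDeriv ℝ n (g h) y‖ ≤ C * h ^ (-((n : ℝ) * (1 - ε')))) :
    ∀ N : ℕ, ∃ C > 0, ∀ h ∈ Set.Ioc (0:ℝ) 1, ∀ x : EuclideanSpace ℝ (Fin m),
      ‖∫ ξ : EuclideanSpace ℝ (Fin m), ∫ y : EuclideanSpace ℝ (Fin m),
          Complex.exp (Complex.I * Complex.ofReal (⟪x - y, ξ⟫ / h)) * (b ξ * g h y)‖
        ≤ C * h ^ N := by
  refine nonstationary_phase_rough_amplitude_general hδ hε'0
    (hb.continuous.integrable_of_hasCompactSupport hbc) hbsupp hg (fun h hh n ↦ ?_) fun n ↦ ?_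
  · have hgc : HasCompactSupport (g h) :=
      .of_support_subset_isCompact (isCompact_closedBall 0 R) (hgsupp h hh)
    have hcont : Continuous (iteratedFDeriv ℝ n (g h)) :=
      (hg h hh).continuous_iteratedFDeriv (by exact_mod_cast le_top)
    exact hcont.integrable_of_hasCompactSupport (hgc.iteratedFDeriv n)
  · obtain ⟨C, hC⟩ := hgder n
    refine ⟨C * volume.real (Metric.closedBall (0 : EuclideanSpace ℝ (Fin m)) R), fun h hh ↦ ?_⟩
    rw [mul_right_comm]
    exact integral_norm_iteratedFDeriv_le_of_support_subset Metric.isClosed_closedBall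
      measure_closedBall_lt_top (hgsupp h hh) (hC h hh)
end

section
/- Let m ≥ 1 and let β : ℝ^m → ℂ be smooth and compactly supported with β ≡ 1 on some neighborhood of 0. For h > 0 and u ∈ L¹(ℝ^m), define (T_h^β u)(x) := (2πh)^{−m} ∫_{ℝ^m} β(ξ) ( ∫_{ℝ^m} e^{(i/h)⟨x−y, ξ⟩} u(y) dy ) dξ. Let A ⊆ ℝ^m be a bounded measurable set and suppose there is C₀ > 0 such that the Lebesgue measure of {x ∈ ℝ^m : dist(x, ∂A) ≤ r} is at most C₀ r for all r ∈ (0,1], where ∂A is the topological boundary of A. Then there exists C > 0 such that for all h ∈ (0,1], ‖ 1_A − T_h^β (1_A) ‖_{L²(ℝ^m)} ≤ C h^{1/2}. -/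
open MeasureTheory Set
open scoped RealInnerProductSpace

/-!
The function `G = 𝓕⁻ β` is Schwartz with `∫ G = β 0 = 1`, and the multiplier averages translates
against it: `T_h u (x) = ∫ G(w) u(x - 2πh w) dw`. Hence
`u(x) - T_h u (x) = ∫ G(w) (u(x) - u(x - 2πh w)) dw`. For `u = 1_A` this is bounded, and its `L¹`
norm is `O(h)` because `x` and `x - v` can be separated by `A` only if `x` is within `|v|` of `∂A`.
Interpolating between `L¹` and `L^∞` gives `O(h^{1/p})` in `L^p`.
-/

open scoped FourierTransform SchwartzMap ENNReal

section TranslatesOfIndicators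

theorem enorm_indicator_one_sub_le_one {α : Type*} (A : Set α) (x y : α) :
    ‖A.indicator (1 : α → ℂ) x - A.indicator (1 : α → ℂ) y‖ₑ ≤ 1 := by
  by_cases hx : x ∈ A <;> by_cases hy : y ∈ A <;> simp [hx, hy]

theorem lintegral_indicator_one_sub_translate_le_two_mul {G : Type*} [AddGroup G]
    [MeasurableSpace G] [MeasurableAdd G] {μ : Measure G} [μ.IsAddRightInvariant]
    (A : Set G) (v : G) :
    ∫⁻ x, ‖A.indicator (1 : G → ℂ) x - A.indicator (1 : G → ℂ) (x - v)‖ₑ ∂μ ≤ 2 * μ A := by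
  have hsupp (x : G) : ‖A.indicator (1 : G → ℂ) x - A.indicator (1 : G → ℂ) (x - v)‖ₑ ≤
      (A ∪ (· + -v) ⁻¹' A).indicator 1 x := by
    by_cases hx : x ∈ A <;> by_cases hy : x - v ∈ A <;> simp [indicator, ← sub_eq_add_neg, hx, hy]
  calc ∫⁻ x, ‖A.indicator (1 : G → ℂ) x - A.indicator (1 : G → ℂ) (x - v)‖ₑ ∂μ
      ≤ μ (A ∪ (· + -v) ⁻¹' A) := (lintegral_mono hsupp).trans (lintegral_indicator_one_le _)
    _ ≤ μ A + μ ((· + -v) ⁻¹' A) := measure_union_le _ _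
    _ = 2 * μ A := by rw [measure_preimage_add_right, two_mul]

theorem measure_frontier_eq_zero_of_measure_infDist_frontier_le {X : Type*} [PseudoMetricSpace X]
    [MeasurableSpace X] {μ : Measure X} {A : Set X} {C₀ : ℝ}
    (hbdry : ∀ r ∈ Ioc (0 : ℝ) 1,
      μ {x | Metric.infDist x (frontier A) ≤ r} ≤ ENNReal.ofReal (C₀ * r)) :
    μ (frontier A) = 0 := by
  have hlim : Filter.Tendsto (fun r ↦ ENNReal.ofReal (C₀ * r)) (nhdsWithin 0 (Ioi 0)) (nhds 0) := by
    have hcont : Continuous fun r ↦ ENNReal.ofReal (C₀ * r) :=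
      ENNReal.continuous_ofReal.comp (continuous_const_mul C₀)
    simpa using (hcont.tendsto 0).mono_left nhdsWithin_le_nhds
  refine le_antisymm (ge_of_tendsto hlim ?_) zero_le
  filter_upwards [Ioc_mem_nhdsGT one_pos] with r hr
  refine (measure_mono fun x hx ↦ ?_).trans (hbdry r hr)
  simpa [Metric.infDist_zero_of_mem hx] using hr.1.le

theorem inter_frontier_nonempty_of_isPreconnected {X : Type*} [TopologicalSpace X] {s A : Set X}
    (hs : IsPreconnected s) (hA : (s ∩ A).Nonempty) (hA' : (s ∩ Aᶜ).Nonempty) :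
    (s ∩ frontier A).Nonempty := by
  rw [frontier_eq_closure_inter_closure]
  refine isPreconnected_closed_iff.mp hs _ _ isClosed_closure isClosed_closure (fun x _ ↦ ?_)
    (hA.mono (by gcongr; exact subset_closure)) (hA'.mono (by gcongr; exact subset_closure))
  exact (em (x ∈ A)).imp (subset_closure ·) (subset_closure ·)

variable {V : Type*} [NormedAddCommGroup V] [NormedSpace ℝ V] {A : Set V}

theorem infDist_frontier_le_dist {x y : V} (hxy : ¬(x ∈ A ↔ y ∈ A)) :
    Metric.infDist x (frontier A) ≤ dist x y := by
  have hcross : (segment ℝ x y ∩ A).Nonempty ∧ (segment ℝ x y ∩ Aᶜ).Nonempty := by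
    have hx := left_mem_segment ℝ x y
    have hy := right_mem_segment ℝ x y
    by_cases hxA : x ∈ A
    · exact ⟨⟨x, hx, hxA⟩, ⟨y, hy, fun hyA ↦ hxy (iff_of_true hxA hyA)⟩⟩
    · exact ⟨⟨y, hy, by_contra fun hyA ↦ hxy (iff_of_false hxA hyA)⟩, ⟨x, hx, hxA⟩⟩
  obtain ⟨z, hz, hzA⟩ := inter_frontier_nonempty_of_isPreconnected
    (convex_segment x y).isPreconnected hcross.1 hcross.2
  calc Metric.infDist x (frontier A) ≤ dist x z := Metric.infDist_le_dist_of_mem hzA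
    _ = dist z x := dist_comm x z
    _ ≤ dist x y := segment_subset_closedBall_left x y hz

variable [MeasurableSpace V] {μ : Measure V}

theorem lintegral_indicator_one_sub_translate_le_measure_infDist_frontier_le (A : Set V) (v : V) :
    ∫⁻ x, ‖A.indicator (1 : V → ℂ) x - A.indicator (1 : V → ℂ) (x - v)‖ₑ ∂μ ≤
      μ {x | Metric.infDist x (frontier A) ≤ ‖v‖} := by
  refine (lintegral_mono fun x ↦ ?_).trans (lintegral_indicator_one_le _)
  by_cases hx : x ∈ A ↔ x - v ∈ A
  · by_cases hxA : x ∈ A <;> simp [hxA, ← hx]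
  · have hnear : x ∈ {x | Metric.infDist x (frontier A) ≤ ‖v‖} := by
      simpa [dist_eq_norm] using infDist_frontier_le_dist hx
    rw [indicator_of_mem hnear]
    exact enorm_indicator_one_sub_le_one A x (x - v)

theorem lintegral_indicator_one_sub_translate_le [BorelSpace V] [μ.IsAddRightInvariant]
    {C₀ : ℝ} (hbdry : ∀ r ∈ Ioc (0 : ℝ) 1,
      μ {x | Metric.infDist x (frontier A) ≤ r} ≤ ENNReal.ofReal (C₀ * r)) (v : V) :
    ∫⁻ x, ‖A.indicator (1 : V → ℂ) x - A.indicator (1 : V → ℂ) (x - v)‖ₑ ∂μ ≤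
      (ENNReal.ofReal C₀ + 2 * μ A) * ‖v‖ₑ := by
  rcases eq_or_ne v 0 with rfl | hv
  · simp
  rw [add_mul]
  rcases le_or_gt ‖v‖ 1 with hv1 | hv1
  · refine le_add_right ?_
    rw [← ofReal_norm, ← ENNReal.ofReal_mul' (norm_nonneg v)]
    exact (lintegral_indicator_one_sub_translate_le_measure_infDist_frontier_le A v).trans
      (hbdry _ ⟨norm_pos_iff.mpr hv, hv1⟩)
  · have hv1' : 1 ≤ ‖v‖ₑ := by
      rw [← ofReal_norm]
      exact ENNReal.one_le_ofReal.mpr hv1.le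
    exact le_add_left <| (lintegral_indicator_one_sub_translate_le_two_mul A v).trans
      (le_mul_of_one_le_right' hv1')

end TranslatesOfIndicators

theorem eLpNorm_le_rpow_of_enorm_le {α F : Type*} [MeasurableSpace α] [NormedAddCommGroup F]
    {μ : Measure α} {f : α → F} {M : ℝ≥0∞} (hM : M ≠ ∞) (hf : ∀ᵐ x ∂μ, ‖f x‖ₑ ≤ M)
    {p : ℝ≥0∞} (hp1 : 1 ≤ p) (hp : p ≠ ∞) :
    eLpNorm f p μ ≤ (M ^ (p.toReal - 1) * eLpNorm f 1 μ) ^ (1 / p.toReal) := by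
  have hp1' : 0 ≤ p.toReal - 1 := sub_nonneg.mpr (ENNReal.toReal_mono hp hp1)
  rw [eLpNorm_eq_lintegral_rpow_enorm_toReal (one_pos.trans_le hp1).ne' hp,
    eLpNorm_one_eq_lintegral_enorm,
    ← lintegral_const_mul' _ _ (ENNReal.rpow_ne_top_of_nonneg hp1' hM)]
  gcongr ?_ ^ _
  refine lintegral_mono_ae (hf.mono fun x hx ↦ ?_)
  calc ‖f x‖ₑ ^ p.toReal = ‖f x‖ₑ ^ (p.toReal - 1) * ‖f x‖ₑ := by
        simpa using ENNReal.rpow_add_of_nonneg (x := ‖f x‖ₑ) _ 1 hp1' zero_le_one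
    _ ≤ M ^ (p.toReal - 1) * ‖f x‖ₑ := by gcongr

theorem aestronglyMeasurable_comp_sub_smul {V F : Type*} [NormedAddCommGroup V] [NormedSpace ℝ V]
    [MeasurableSpace V] [BorelSpace V] [SecondCountableTopology V] [TopologicalSpace F]
    {μ ν : Measure V} [SFinite μ] [SFinite ν] [μ.IsAddRightInvariant]
    {u : V → F} (hu : AEStronglyMeasurable u μ) (c : ℝ) :
    AEStronglyMeasurable (fun p : V × V ↦ u (p.1 - c • p.2)) (μ.prod ν) :=
  hu.comp_quasiMeasurePreserving <| QuasiMeasurePreserving.prod_of_left (by fun_prop) <|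
    .of_forall fun w ↦ (measurePreserving_sub_right μ (c • w)).quasiMeasurePreserving

theorem lintegral_enorm_mul_enorm_ne_top {V F : Type*} [NormedAddCommGroup V] [NormedSpace ℝ V]
    [MeasurableSpace V] [BorelSpace V] [SecondCountableTopology V] {μ : Measure V}
    [μ.HasTemperateGrowth] [NormedAddCommGroup F] [NormedSpace ℝ F] (f : 𝓢(V, F)) :
    ∫⁻ w, ‖f w‖ₑ * ‖w‖ₑ ∂μ ≠ ∞ := by
  have := (f.integrable_pow_mul μ 1).lintegral_lt_top.ne
  simpa [ENNReal.ofReal_mul, mul_comm] using this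

section SemiclassicalMultiplier

variable {V E : Type*} [NormedAddCommGroup V] [InnerProductSpace ℝ V] [FiniteDimensional ℝ V]
  [MeasurableSpace V] [BorelSpace V] [NormedAddCommGroup E] [NormedSpace ℂ E]

/-- The semiclassical Fourier multiplier `T_h^β` with symbol `β`, as an iterated integral; it is
meaningful for `h > 0` and integrable `β` and `u`. -/
noncomputable def semiclassicalMultiplier (β : V → ℂ) (h : ℝ) (u : V → E) (x : V) : E :=
  ((2 * Real.pi * h) ^ Module.finrank ℝ V)⁻¹ •
    ∫ ξ, β ξ • ∫ y, Complex.exp (Complex.I * ((⟪x - y, ξ⟫ / h : ℝ) : ℂ)) • u y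

variable {u : V → E} {h : ℝ}

theorem integral_exp_inner_div_smul_eq_fourierInv (hh : 0 < h) (u : V → E) (x ξ : V) :
    ∫ y, Complex.exp (Complex.I * ((⟪x - y, ξ⟫ / h : ℝ) : ℂ)) • u y =
      (2 * Real.pi * h) ^ Module.finrank ℝ V •
        𝓕⁻ (fun w ↦ u (x - (2 * Real.pi * h) • w)) ξ := by
  set c := 2 * Real.pi * h with hc
  have hc0 : 0 < c := by positivity
  set φ : V → E := fun z ↦ Complex.exp (Complex.I * ((⟪z, ξ⟫ / h : ℝ) : ℂ)) • u (x - z)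
  calc ∫ y, Complex.exp (Complex.I * ((⟪x - y, ξ⟫ / h : ℝ) : ℂ)) • u y
      = ∫ y, φ (x - y) := by simp only [φ, sub_sub_cancel]
    _ = ∫ z, φ z := integral_sub_left_eq_self φ volume x
    _ = c ^ Module.finrank ℝ V • ∫ w, φ (c • w) := by
        rw [Measure.integral_comp_smul_of_nonneg volume φ c (hR := hc0.le),
          smul_inv_smul₀ (by positivity)]
    _ = c ^ Module.finrank ℝ V • 𝓕⁻ (fun w ↦ u (x - c • w)) ξ := by
        have hphase (w : V) : ⟪c • w, ξ⟫ / h = 2 * Real.pi * ⟪w, ξ⟫ := by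
          rw [real_inner_smul_left, hc]
          field_simp
        simp only [φ, hphase, Real.fourierInv_eq', mul_comm Complex.I]

variable [CompleteSpace E]

theorem integral_fourierInv_smul_eq_of_integrable {f : V → ℂ} {g : V → E}
    (hf : Integrable f) (hg : Integrable g) :
    ∫ w, 𝓕⁻ f w • g w = ∫ ξ, f ξ • 𝓕⁻ g ξ := by
  have hflip : (-innerₗ V).flip = -innerₗ V := by
    ext v w
    simp [real_inner_comm]
  have := VectorFourier.integral_fourierIntegral_smul_eq_flip (L := -innerₗ V)
    Real.continuous_fourierChar continuous_inner.neg hf hg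
  rwa [hflip] at this

theorem semiclassicalMultiplier_eq_integral_fourierInv {β : V → ℂ} (hβ : Integrable β)
    (hu : Integrable u) (hh : 0 < h) (x : V) :
    semiclassicalMultiplier β h u x = ∫ w, 𝓕⁻ β w • u (x - (2 * Real.pi * h) • w) := by
  have hc : 2 * Real.pi * h ≠ 0 := by positivity
  simp_rw [semiclassicalMultiplier, integral_exp_inner_div_smul_eq_fourierInv hh,
    smul_comm (β _), integral_smul]
  rw [inv_smul_smul₀ (pow_ne_zero _ hc), integral_fourierInv_smul_eq_of_integrable hβ
    ((hu.comp_sub_left x).comp_smul hc)]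

theorem integral_fourierInv_eq_apply_zero (β : 𝓢(V, E)) : ∫ w, (𝓕⁻ β) w = β 0 := by
  calc ∫ w, (𝓕⁻ β) w = 𝓕 (𝓕⁻ β) 0 := by
        rw [SchwartzMap.fourier_coe, Real.fourier_eq']
        simp
    _ = β 0 := by rw [FourierTransform.fourier_fourierInv_eq]

theorem enorm_sub_semiclassicalMultiplier_le {β : 𝓢(V, ℂ)} (hβ : β 0 = 1) (hu : Integrable u)
    (hh : 0 < h) (x : V) :
    ‖u x - semiclassicalMultiplier β h u x‖ₑ ≤
      ∫⁻ w, ‖(𝓕⁻ β) w‖ₑ * ‖u x - u (x - (2 * Real.pi * h) • w)‖ₑ := by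
  have hc : 2 * Real.pi * h ≠ 0 := by positivity
  have htranslate : Integrable fun w ↦ (𝓕⁻ β) w • u (x - (2 * Real.pi * h) • w) :=
    ((hu.comp_sub_left x).comp_smul hc).bdd_smul ‖(𝓕⁻ β).toBoundedContinuousFunction‖
      (𝓕⁻ β).continuous.aestronglyMeasurable
      (.of_forall (𝓕⁻ β).toBoundedContinuousFunction.norm_coe_le_norm)
  have haverage : u x - semiclassicalMultiplier β h u x =
      ∫ w, (𝓕⁻ β) w • (u x - u (x - (2 * Real.pi * h) • w)) := by
    simp_rw [smul_sub]
    rw [semiclassicalMultiplier_eq_integral_fourierInv β.integrable hu hh,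
      ← SchwartzMap.fourierInv_coe, integral_sub ((𝓕⁻ β).integrable.smul_const _) htranslate,
      integral_smul_const, integral_fourierInv_eq_apply_zero, hβ, one_smul]
  simp_rw [haverage, ← enorm_smul]
  exact enorm_integral_le_lintegral_enorm _

theorem enorm_sub_semiclassicalMultiplier_le_mul {β : 𝓢(V, ℂ)} (hβ : β 0 = 1) (hu : Integrable u)
    {B : ℝ≥0∞} (hB : ∀ x y, ‖u x - u y‖ₑ ≤ B) (hh : 0 < h) (x : V) :
    ‖u x - semiclassicalMultiplier β h u x‖ₑ ≤ (∫⁻ w, ‖(𝓕⁻ β) w‖ₑ) * B :=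
  calc ‖u x - semiclassicalMultiplier β h u x‖ₑ
    _ ≤ ∫⁻ w, ‖(𝓕⁻ β) w‖ₑ * ‖u x - u (x - (2 * Real.pi * h) • w)‖ₑ :=
        enorm_sub_semiclassicalMultiplier_le hβ hu hh x
    _ ≤ ∫⁻ w, ‖(𝓕⁻ β) w‖ₑ * B := lintegral_mono fun w ↦ by gcongr; exact hB _ _
    _ = (∫⁻ w, ‖(𝓕⁻ β) w‖ₑ) * B :=
        lintegral_mul_const _ (𝓕⁻ β).continuous.measurable.enorm

theorem eLpNorm_one_sub_semiclassicalMultiplier_le {β : 𝓢(V, ℂ)} (hβ : β 0 = 1)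
    (hu : Integrable u) {K : ℝ≥0∞} (hK : ∀ v, ∫⁻ x, ‖u x - u (x - v)‖ₑ ≤ K * ‖v‖ₑ) (hh : 0 < h) :
    eLpNorm (fun x ↦ u x - semiclassicalMultiplier β h u x) 1 ≤
      K * ‖2 * Real.pi * h‖ₑ * ∫⁻ w, ‖(𝓕⁻ β) w‖ₑ * ‖w‖ₑ := by
  set c := 2 * Real.pi * h
  have hmeas : AEMeasurable
      (Function.uncurry fun x w ↦ ‖(𝓕⁻ β) w‖ₑ * ‖u x - u (x - c • w)‖ₑ) (volume.prod volume) :=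
    ((𝓕⁻ β).continuous.measurable.enorm.comp measurable_snd).aemeasurable.mul
      (hu.1.comp_fst.sub (aestronglyMeasurable_comp_sub_smul hu.1 c)).enorm
  rw [eLpNorm_one_eq_lintegral_enorm]
  exact calc ∫⁻ x, ‖u x - semiclassicalMultiplier β h u x‖ₑ
    _ ≤ ∫⁻ x, ∫⁻ w, ‖(𝓕⁻ β) w‖ₑ * ‖u x - u (x - c • w)‖ₑ :=
        lintegral_mono fun x ↦ enorm_sub_semiclassicalMultiplier_le hβ hu hh x
    _ = ∫⁻ w, ‖(𝓕⁻ β) w‖ₑ * ∫⁻ x, ‖u x - u (x - c • w)‖ₑ := by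
        rw [lintegral_lintegral_swap hmeas]
        simp_rw [lintegral_const_mul' _ _ enorm_ne_top]
    _ ≤ ∫⁻ w, ‖(𝓕⁻ β) w‖ₑ * (K * ‖c • w‖ₑ) := lintegral_mono fun w ↦ by gcongr; exact hK _
    _ = ∫⁻ w, K * ‖c‖ₑ * (‖(𝓕⁻ β) w‖ₑ * ‖w‖ₑ) := by
        congr! 2 with w
        rw [enorm_smul]
        ring
    _ = K * ‖c‖ₑ * ∫⁻ w, ‖(𝓕⁻ β) w‖ₑ * ‖w‖ₑ :=
        lintegral_const_mul _ ((𝓕⁻ β).continuous.measurable.enorm.mul measurable_id.enorm)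

theorem eLpNorm_sub_semiclassicalMultiplier_le {β : 𝓢(V, ℂ)} (hβ : β 0 = 1)
    (hu : Integrable u) {B K : ℝ≥0∞} (hB_top : B ≠ ∞) (hB : ∀ x y, ‖u x - u y‖ₑ ≤ B)
    (hK : ∀ v, ∫⁻ x, ‖u x - u (x - v)‖ₑ ≤ K * ‖v‖ₑ)
    {p : ℝ≥0∞} (hp1 : 1 ≤ p) (hp : p ≠ ∞) (hh : 0 < h) :
    eLpNorm (fun x ↦ u x - semiclassicalMultiplier β h u x) p ≤
      (((∫⁻ w, ‖(𝓕⁻ β) w‖ₑ) * B) ^ (p.toReal - 1) *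
        (K * ‖2 * Real.pi * h‖ₑ * ∫⁻ w, ‖(𝓕⁻ β) w‖ₑ * ‖w‖ₑ)) ^ (1 / p.toReal) := by
  refine (eLpNorm_le_rpow_of_enorm_le (ENNReal.mul_ne_top (𝓕⁻ β).integrable.2.ne hB_top)
    (.of_forall (enorm_sub_semiclassicalMultiplier_le_mul hβ hu hB hh)) hp1 hp).trans ?_
  refine ENNReal.rpow_le_rpow (mul_le_mul_right ?_ _) (by positivity)
  exact eLpNorm_one_sub_semiclassicalMultiplier_le hβ hu hK hh

theorem exists_eLpNorm_sub_semiclassicalMultiplier_le {β : 𝓢(V, ℂ)} (hβ : β 0 = 1)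
    (hu : Integrable u) {B K : ℝ≥0∞} (hB_top : B ≠ ∞) (hB : ∀ x y, ‖u x - u y‖ₑ ≤ B)
    (hK_top : K ≠ ∞) (hK : ∀ v, ∫⁻ x, ‖u x - u (x - v)‖ₑ ≤ K * ‖v‖ₑ)
    {p : ℝ≥0∞} (hp1 : 1 ≤ p) (hp : p ≠ ∞) :
    ∃ C > 0, ∀ h > 0, eLpNorm (fun x ↦ u x - semiclassicalMultiplier β h u x) p ≤
      ENNReal.ofReal (C * h ^ (1 / p.toReal)) := by
  obtain ⟨D, hD_top, hD⟩ : ∃ D ≠ ∞, ∀ h > 0,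
      eLpNorm (fun x ↦ u x - semiclassicalMultiplier β h u x) p ≤
        (D * ‖h‖ₑ) ^ (1 / p.toReal) := by
    refine ⟨((∫⁻ w, ‖(𝓕⁻ β) w‖ₑ) * B) ^ (p.toReal - 1) *
      (K * ‖2 * Real.pi‖ₑ * ∫⁻ w, ‖(𝓕⁻ β) w‖ₑ * ‖w‖ₑ), ?_, fun h hh ↦ ?_⟩
    · have hp1' : 0 ≤ p.toReal - 1 := sub_nonneg.mpr (ENNReal.toReal_mono hp hp1)
      exact ENNReal.mul_ne_top
        (ENNReal.rpow_ne_top_of_nonneg hp1' (ENNReal.mul_ne_top (𝓕⁻ β).integrable.2.ne hB_top))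
        (ENNReal.mul_ne_top (ENNReal.mul_ne_top hK_top enorm_ne_top)
          (lintegral_enorm_mul_enorm_ne_top (𝓕⁻ β)))
    · refine (eLpNorm_sub_semiclassicalMultiplier_le hβ hu hB_top hB hK hp1 hp hh).trans_eq ?_
      rw [enorm_mul _ h]
      congr 1
      ring
  refine ⟨(D ^ (1 / p.toReal)).toReal + 1, by positivity, fun h hh ↦ (hD h hh).trans ?_⟩
  calc (D * ‖h‖ₑ) ^ (1 / p.toReal)
      = ENNReal.ofReal ((D ^ (1 / p.toReal)).toReal * h ^ (1 / p.toReal)) := by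
        rw [ENNReal.mul_rpow_of_nonneg _ _ (by positivity),
          ENNReal.ofReal_mul ENNReal.toReal_nonneg, ENNReal.ofReal_toReal
            (ENNReal.rpow_ne_top_of_nonneg (by positivity) hD_top),
          ← ENNReal.ofReal_rpow_of_pos hh, Real.enorm_of_nonneg hh.le]
    _ ≤ ENNReal.ofReal (((D ^ (1 / p.toReal)).toReal + 1) * h ^ (1 / p.toReal)) := by
        gcongr
        exact le_add_of_nonneg_right zero_le_one

theorem indicator_lowfreq_approx_general {β : 𝓢(V, ℂ)} (hβ : β 0 = 1) {A : Set V}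
    (hA : volume A ≠ ∞) {C₀ : ℝ}
    (hbdry : ∀ r ∈ Ioc (0 : ℝ) 1,
      volume {x | Metric.infDist x (frontier A) ≤ r} ≤ ENNReal.ofReal (C₀ * r))
    {p : ℝ≥0∞} (hp1 : 1 ≤ p) (hp : p ≠ ∞) :
    ∃ C > 0, ∀ h > 0,
      eLpNorm (fun x ↦ A.indicator (1 : V → ℂ) x
          - semiclassicalMultiplier β h (A.indicator (1 : V → ℂ)) x) p ≤
        ENNReal.ofReal (C * h ^ (1 / p.toReal)) := by
  have hA_meas : NullMeasurableSet A :=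
    nullMeasurableSet_of_null_frontier <|
      measure_frontier_eq_zero_of_measure_infDist_frontier_le hbdry
  have hA_int : Integrable (A.indicator (1 : V → ℂ)) :=
    IntegrableOn.integrable_indicator₀ (integrableOn_const hA) hA_meas
  exact exists_eLpNorm_sub_semiclassicalMultiplier_le hβ hA_int ENNReal.one_ne_top
    (enorm_indicator_one_sub_le_one A)
    (ENNReal.add_ne_top.mpr ⟨ENNReal.ofReal_ne_top, ENNReal.mul_ne_top ENNReal.ofNat_ne_top hA⟩)
    (lintegral_indicator_one_sub_translate_le hbdry) hp1 hp

end SemiclassicalMultiplier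

/-- Lemma 4.1 (Euclidean-chart content): for a bounded measurable set `A` whose boundary
has a linear Minkowski-content bound, the indicator of `A` differs from its low-frequency
part `T_h^β 1_A` by `O(h^{1/2})` in `L²`. -/
theorem indicator_lowfreq_approx
    (m : ℕ) (hm : 1 ≤ m)
    (β : EuclideanSpace ℝ (Fin m) → ℂ) (hβ : ContDiff ℝ (⊤ : ℕ∞) β) (hβc : HasCompactSupport β)
    (hβ1 : ∀ᶠ ξ in nhds (0 : EuclideanSpace ℝ (Fin m)), β ξ = 1)
    (T : ℝ → (EuclideanSpace ℝ (Fin m) → ℂ) → EuclideanSpace ℝ (Fin m) → ℂ)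
    (hT : ∀ h u x, T h u x
      = Complex.ofReal (((2 * Real.pi * h) ^ m)⁻¹) *
          ∫ ξ : EuclideanSpace ℝ (Fin m), β ξ *
            ∫ y : EuclideanSpace ℝ (Fin m),
              Complex.exp (Complex.I * Complex.ofReal (⟪x - y, ξ⟫ / h)) * u y)
    (A : Set (EuclideanSpace ℝ (Fin m))) (hAbd : Bornology.IsBounded A)
    (hAmeas : MeasurableSet A)
    (C₀ : ℝ) (hC₀ : 0 < C₀)
    (hbdry : ∀ r ∈ Set.Ioc (0:ℝ) 1,
      volume {x : EuclideanSpace ℝ (Fin m) | Metric.infDist x (frontier A) ≤ r}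
        ≤ ENNReal.ofReal (C₀ * r)) :
    ∃ C > 0, ∀ h ∈ Set.Ioc (0:ℝ) 1,
      eLpNorm (fun x => A.indicator (fun _ => (1:ℂ)) x
          - T h (A.indicator (fun _ => (1:ℂ))) x) 2 volume
        ≤ ENNReal.ofReal (C * Real.sqrt h) := by
  obtain ⟨C, hC, hbound⟩ := indicator_lowfreq_approx_general (β := hβc.toSchwartzMap hβ)
    hβ1.self_of_nhds hAbd.measure_lt_top.ne hbdry one_le_two ENNReal.ofNat_ne_top
  exact ⟨C, hC, fun h hh ↦ by
    simpa [semiclassicalMultiplier, hT, Real.sqrt_eq_rpow, Pi.one_def] using hbound h hh.1⟩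
end

section
/- Let a : ℝ² × ℝ² → ℂ be smooth with compact support. Then lim_{h → 0⁺} (2πh)^{−2} ∫_{[0,1]²} ∫_{[0,1]²} ∫_{ℝ²} a(x, ξ) e^{(i/h)( ⟨x−y, ξ⟩ + y₁ − x₁ )} dξ dy dx = ∫_{[0,1]²} a(x, (1,0)) dx, where the integrals are iterated (innermost in ξ ∈ ℝ², then y ∈ [0,1]², then x ∈ [0,1]²), x = (x₁,x₂), y = (y₁,y₂), and ⟨·,·⟩ is the Euclidean inner product on ℝ². -/
open MeasureTheory Set Filter
open scoped RealInnerProductSpace Topology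

/-!
Let `η` be the momentum of the plane wave, `Q` the domain of `x` and `y`, `d` the dimension, and put
`ζ = (y - x) / (2πh)`. The `ξ`-integral is `e^{2πi⟨ζ, η⟩}` times the Fourier transform of `a(x, ·)`
at `ζ`, and the factor `(2πh)⁻ᵈ` is the Jacobian of `y = x + 2πh ζ`. Hence, for fixed `x`, the
normalised `y`-integral is the integral that Fourier inversion at `η` requires, restricted to the
`ζ` with `x + 2πh ζ ∈ Q`; when `x` is interior to `Q` these sets exhaust the space as `h → 0⁺`, so
the limit is `a(x, η)`.

Integrating by parts `d + 1` times in `ξ`, the Fourier transforms of the slices `a(x, ·)` are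
dominated, uniformly in `x`, by a multiple of the integrable function `(1 + ‖ζ‖)^{-(d + 1)}`. This
justifies the inversion, and also the dominated convergence in `x`.
-/

open scoped FourierTransform
open Module (finrank)

namespace PlaneWave

lemma hasCompactSupport_slice {X V F : Type*} [TopologicalSpace X] [TopologicalSpace V]
    [R1Space V] [Zero F] {a : X × V → F} (hac : HasCompactSupport a) (x : X) :
    HasCompactSupport fun ξ => a (x, ξ) :=
  .of_support_subset_isCompact (hac.isCompact.image continuous_snd)
    fun ξ hξ => ⟨(x, ξ), subset_tsupport _ hξ, rfl⟩

lemma integrable_slice {X V F : Type*} [TopologicalSpace X] [TopologicalSpace V] [R1Space V]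
    [MeasurableSpace V] [OpensMeasurableSpace V] {μ : Measure V} [IsFiniteMeasureOnCompacts μ]
    [NormedAddCommGroup F] {a : X × V → F} (ha : Continuous a) (hac : HasCompactSupport a)
    (x : X) : Integrable (fun ξ => a (x, ξ)) μ :=
  (ha.comp (Continuous.prodMk_right x)).integrable_of_hasCompactSupport
    (hasCompactSupport_slice hac x)

section Slice

variable {X V F : Type*} [NormedAddCommGroup X] [NormedSpace ℝ X]
  [NormedAddCommGroup V] [NormedSpace ℝ V] [NormedAddCommGroup F] [NormedSpace ℝ F]
  {a : X × V → F} {n : ℕ}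

lemma contDiff_slice {k : WithTop ℕ∞} (ha : ContDiff ℝ k a) (x : X) :
    ContDiff ℝ k fun ξ => a (x, ξ) :=
  ha.comp (contDiff_prodMk_right x)

lemma norm_iteratedFDeriv_slice_le (ha : ContDiff ℝ n a) (x : X) (ξ : V) :
    ‖iteratedFDeriv ℝ n (fun ξ => a (x, ξ)) ξ‖ ≤ ‖iteratedFDeriv ℝ n a (x, ξ)‖ := by
  have slice_eq : (fun ξ => a (x, ξ)) =
      (fun z => a ((x, 0) + z)) ∘ ContinuousLinearMap.inr ℝ X V := by
    ext ξ; simp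
  have translate_contDiff : ContDiff ℝ n fun z => a ((x, 0) + z) :=
    ha.comp (contDiff_const.add contDiff_id)
  rw [slice_eq, ContinuousLinearMap.iteratedFDeriv_comp_right _ translate_contDiff ξ le_rfl,
    iteratedFDeriv_comp_add_left]
  calc
    _ ≤ ‖iteratedFDeriv ℝ n a ((x, 0) + ContinuousLinearMap.inr ℝ X V ξ)‖ *
        ∏ _i : Fin n, ‖ContinuousLinearMap.inr ℝ X V‖ :=
      ContinuousMultilinearMap.norm_compContinuousLinearMap_le _ _
    _ ≤ ‖iteratedFDeriv ℝ n a ((x, 0) + ContinuousLinearMap.inr ℝ X V ξ)‖ * 1 := by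
      gcongr
      exact Finset.prod_le_one (fun _ _ => norm_nonneg _)
        fun _ _ => ContinuousLinearMap.norm_inr_le_one ℝ X V
    _ = _ := by simp

variable [MeasurableSpace V] [BorelSpace V] {μ : Measure V} [IsFiniteMeasureOnCompacts μ]

lemma integrable_norm_iteratedFDeriv_slice (ha : ContDiff ℝ n a) (hac : HasCompactSupport a)
    (x : X) : Integrable (fun ξ => ‖iteratedFDeriv ℝ n (fun ξ => a (x, ξ)) ξ‖) μ :=
  ((contDiff_slice ha x).continuous_iteratedFDeriv le_rfl).norm.integrable_of_hasCompactSupport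
    ((hasCompactSupport_slice hac x).iteratedFDeriv n).norm

lemma exists_integral_norm_iteratedFDeriv_slice_le (ha : ContDiff ℝ n a)
    (hac : HasCompactSupport a) :
    ∃ M : ℝ, ∀ x, ∫ ξ, ‖iteratedFDeriv ℝ n (fun ξ => a (x, ξ)) ξ‖ ∂μ ≤ M := by
  obtain ⟨C, hC⟩ := (hac.iteratedFDeriv (𝕜 := ℝ) n).exists_bound_of_continuous
    (ha.continuous_iteratedFDeriv le_rfl)
  set K := Prod.snd '' tsupport a
  have hK : IsCompact K := hac.isCompact.image continuous_snd
  refine ⟨∫ ξ, K.indicator (fun _ => C) ξ ∂μ, fun x => integral_mono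
    (integrable_norm_iteratedFDeriv_slice ha hac x)
    ((integrable_indicator_iff hK.measurableSet).2 (integrableOn_const hK.measure_lt_top.ne))
    fun ξ => (norm_iteratedFDeriv_slice_le ha x ξ).trans ?_⟩
  by_cases hξ : ξ ∈ K
  · simpa [hξ] using hC (x, ξ)
  · have deriv_eq_zero : iteratedFDeriv ℝ n a (x, ξ) = 0 := by
      by_contra hne
      exact hξ ⟨(x, ξ), support_iteratedFDeriv_subset n hne, rfl⟩
    simp [hξ, deriv_eq_zero]

end Slice

section Fourier

variable {X V F : Type*} [NormedAddCommGroup X] [NormedSpace ℝ X]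
  [NormedAddCommGroup V] [InnerProductSpace ℝ V] [FiniteDimensional ℝ V]
  [MeasurableSpace V] [BorelSpace V] [NormedAddCommGroup F] [NormedSpace ℂ F]
  {a : X × V → F} {n : ℕ}

lemma exists_pow_mul_norm_fourier_slice_le (ha : ContDiff ℝ n a) (hac : HasCompactSupport a) :
    ∃ M : ℝ, ∀ x ζ, ‖ζ‖ ^ n * ‖𝓕 (fun ξ => a (x, ξ)) ζ‖ ≤ M := by
  have ha_le {m : ℕ} (hm : m ≤ n) : ContDiff ℝ m a := ha.of_le (mod_cast hm)
  choose! M hM using fun m (hm : m ≤ n) =>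
    exists_integral_norm_iteratedFDeriv_slice_le (μ := volume) (ha_le hm) hac
  refine ⟨2 ^ n * ∑ m ∈ Finset.range (n + 1), M m, fun x ζ => ?_⟩
  have fourier_le : ‖ζ‖ ^ n * ‖𝓕 (fun ξ => a (x, ξ)) ζ‖ ≤
      2 ^ n * ∑ m ∈ Finset.range (n + 1), ∫ ξ, ‖iteratedFDeriv ℝ m (fun ξ => a (x, ξ)) ξ‖ := by
    simpa [Finset.sum_product] using Real.pow_mul_norm_iteratedFDeriv_fourier_le (K := 0) (N := n)
      (contDiff_slice ha x)
      (fun k m hk hm => by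
        obtain rfl : k = 0 := by simpa using hk
        simpa using integrable_norm_iteratedFDeriv_slice (ha_le (mod_cast hm)) hac x)
      (k := 0) le_rfl le_rfl ζ
  refine fourier_le.trans ?_
  gcongr with m hm
  exact hM m (Finset.mem_range_succ_iff.1 hm) x

lemma exists_norm_fourier_slice_le (ha : ContDiff ℝ n a) (hac : HasCompactSupport a) :
    ∃ C : ℝ, ∀ x ζ, ‖𝓕 (fun ξ => a (x, ξ)) ζ‖ ≤
      (Prod.fst '' tsupport a).indicator (fun _ => C) x * (1 + ‖ζ‖) ^ (-(n : ℝ)) := by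
  obtain ⟨M₀, hM₀⟩ := exists_pow_mul_norm_fourier_slice_le (n := 0) (ha.of_le (by simp)) hac
  obtain ⟨Mₙ, hMₙ⟩ := exists_pow_mul_norm_fourier_slice_le ha hac
  refine ⟨2 ^ n * (M₀ + Mₙ), fun x ζ => ?_⟩
  by_cases hx : x ∈ Prod.fst '' tsupport a
  · simpa [hx] using pow_mul_le_of_le_of_pow_mul_le (k := 0) (norm_nonneg ζ) (norm_nonneg _)
      (by simpa using hM₀ x ζ) (by simpa using hMₙ x ζ)
  · have slice_eq_zero : (fun ξ => a (x, ξ)) = 0 := by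
      ext ξ
      exact image_eq_zero_of_notMem_tsupport fun h => hx ⟨_, h, rfl⟩
    simp [hx, slice_eq_zero, Real.fourier_eq]

lemma integrable_fourier_slice (ha : ContDiff ℝ (finrank ℝ V + 1 : ℕ) a)
    (hac : HasCompactSupport a) (x : X) : Integrable (𝓕 fun ξ => a (x, ξ)) := by
  obtain ⟨C, hC⟩ := exists_norm_fourier_slice_le ha hac
  exact ((integrable_one_add_norm (by simp)).const_mul _).mono'
    (VectorFourier.fourierIntegral_continuous Real.continuous_fourierChar continuous_inner
      (integrable_slice ha.continuous hac x)).aestronglyMeasurable (.of_forall (hC x))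

lemma exists_integral_norm_fourier_slice_le (ha : ContDiff ℝ (finrank ℝ V + 1 : ℕ) a)
    (hac : HasCompactSupport a) :
    ∃ C : ℝ, ∀ x, ∫ ζ, ‖𝓕 (fun ξ => a (x, ξ)) ζ‖ ≤
      (Prod.fst '' tsupport a).indicator (fun _ => C) x := by
  obtain ⟨C, hC⟩ := exists_norm_fourier_slice_le ha hac
  refine ⟨C * ∫ ζ : V, (1 + ‖ζ‖) ^ (-((finrank ℝ V + 1 : ℕ) : ℝ)), fun x => ?_⟩
  rw [indicator_mul_const, ← integral_const_mul]
  exact integral_mono (integrable_fourier_slice ha hac x).norm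
    ((integrable_one_add_norm (by simp)).const_mul _) (hC x)

lemma integral_fourierChar_smul_fourier_eq [CompleteSpace F] {f : V → F} (hf : Continuous f)
    (hfi : Integrable f) (hFf : Integrable (𝓕 f)) (η : V) :
    ∫ ζ, Real.fourierChar ⟪ζ, η⟫ • 𝓕 f ζ = f η := by
  rw [← Real.fourierInv_eq, hf.fourierInv_fourier_eq hfi hFf]

end Fourier

lemma aecover_preimage_add_smul {V : Type*} [AddCommGroup V] [TopologicalSpace V]
    [ContinuousAdd V] [Module ℝ V] [ContinuousSMul ℝ V] [MeasurableSpace V]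
    [OpensMeasurableSpace V] (μ : Measure V) {U : Set V} (hU : IsOpen U) {x : V} (hx : x ∈ U) :
    AECover μ (𝓝 (0 : ℝ)) fun t => {ζ | x + t • ζ ∈ U} where
  ae_eventually_mem := .of_forall fun ζ => by
    have hlim : Tendsto (fun t : ℝ => x + t • ζ) (𝓝 0) (𝓝 x) := by
      simpa using (by fun_prop : Continuous fun t : ℝ => x + t • ζ).tendsto 0
    exact hlim.eventually (hU.mem_nhds hx)
  measurableSet t := (hU.preimage (by fun_prop)).measurableSet

lemma setIntegral_preimage_add_smul {V F : Type*} [NormedAddCommGroup V] [NormedSpace ℝ V]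
    [FiniteDimensional ℝ V] [MeasurableSpace V] [BorelSpace V] (μ : Measure V)
    [μ.IsAddHaarMeasure] [NormedAddCommGroup F] [NormedSpace ℝ F] {U : Set V}
    (hU : MeasurableSet U) (g : V → F) (x : V) (t : ℝ) :
    ∫ ζ in {ζ | x + t • ζ ∈ U}, g (x + t • ζ) ∂μ = |(t ^ finrank ℝ V)⁻¹| • ∫ y in U, g y ∂μ := by
  have hmeas : MeasurableSet {ζ | x + t • ζ ∈ U} :=
    hU.preimage (by fun_prop : Continuous fun ζ => x + t • ζ).measurable
  calc
    _ = ∫ ζ, U.indicator g (x + t • ζ) ∂μ := by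
      rw [← integral_indicator hmeas]
      rfl
    _ = |(t ^ finrank ℝ V)⁻¹| • ∫ y, U.indicator g (x + y) ∂μ :=
      Measure.integral_comp_smul μ (fun y => U.indicator g (x + y)) t
    _ = _ := by rw [integral_add_left_eq_self (U.indicator g) x, integral_indicator hU]

section Pairing

variable {V F : Type*} [NormedAddCommGroup V] [InnerProductSpace ℝ V] [FiniteDimensional ℝ V]
  [MeasurableSpace V] [BorelSpace V] [NormedAddCommGroup F] [NormedSpace ℂ F]
  {a : V × V → F}

/-- The integral kernel of `Op_h(a)` (standard quantization) conjugated by the plane wave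
`e^{i⟨·, η⟩/h}`, without the normalising factor `(2πh)⁻ᵈ`: its integral over `y` is
`(2πh)ᵈ e^{-i⟨x, η⟩/h} Op_h(a) e^{i⟨·, η⟩/h}` at `x`. -/
noncomputable def planeWaveKernel (a : V × V → F) (η : V) (h : ℝ) (x y : V) : F :=
  ∫ ξ, Complex.exp (Complex.I * Complex.ofReal (⟪x - y, ξ - η⟫ / h)) • a (x, ξ)

lemma stronglyMeasurable_planeWaveKernel (ha : Continuous a) (η : V) (h : ℝ) :
    StronglyMeasurable fun p : V × V => planeWaveKernel a η h p.1 p.2 := by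
  refine StronglyMeasurable.integral_prod_right' (f := fun q : (V × V) × V =>
    Complex.exp (Complex.I * Complex.ofReal (⟪q.1.1 - q.1.2, q.2 - η⟫ / h)) • a (q.1.1, q.2)) ?_
  exact Continuous.stronglyMeasurable (by fun_prop)

lemma planeWaveKernel_add_smul (a : V × V → F) (η : V) {h : ℝ} (hh : h ≠ 0) (x ζ : V) :
    planeWaveKernel a η h x (x + (2 * Real.pi * h) • ζ) =
      Real.fourierChar ⟪ζ, η⟫ • 𝓕 (fun ξ => a (x, ξ)) ζ := by
  rw [Real.fourier_eq, planeWaveKernel, Circle.smul_def, ← integral_smul]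
  congr 1 with ξ
  have phase_eq : ⟪x - (x + (2 * Real.pi * h) • ζ), ξ - η⟫ / h =
      2 * Real.pi * (⟪ζ, η⟫ + -⟪ξ, ζ⟫) := by
    rw [sub_add_cancel_left, inner_neg_left, real_inner_smul_left, inner_sub_right,
      real_inner_comm ξ ζ]
    field_simp
    ring
  rw [Circle.smul_def, smul_smul, ← Circle.coe_mul, ← AddChar.map_add_eq_mul,
    Real.fourierChar_apply, phase_eq, mul_comm Complex.I]

lemma inv_pow_smul_setIntegral_planeWaveKernel (a : V × V → F) (η : V) {h : ℝ} (hh : 0 < h)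
    {U : Set V} (hU : MeasurableSet U) (x : V) :
    ((2 * Real.pi * h) ^ finrank ℝ V)⁻¹ • ∫ y in U, planeWaveKernel a η h x y =
      ∫ ζ in {ζ | x + (2 * Real.pi * h) • ζ ∈ U},
        Real.fourierChar ⟪ζ, η⟫ • 𝓕 (fun ξ => a (x, ξ)) ζ := by
  simp_rw [← planeWaveKernel_add_smul a η hh.ne']
  rw [setIntegral_preimage_add_smul volume hU, abs_of_pos (by positivity)]

lemma tendsto_inv_pow_smul_setIntegral_planeWaveKernel [CompleteSpace F]
    (ha : ContDiff ℝ (finrank ℝ V + 1 : ℕ) a) (hac : HasCompactSupport a) (η : V)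
    {U : Set V} (hU : IsOpen U) {x : V} (hx : x ∈ U) :
    Tendsto (fun h : ℝ => ((2 * Real.pi * h) ^ finrank ℝ V)⁻¹ •
      ∫ y in U, planeWaveKernel a η h x y) (𝓝[>] 0) (𝓝 (a (x, η))) := by
  have hFf : Integrable (𝓕 fun ξ => a (x, ξ)) := integrable_fourier_slice ha hac x
  have scale_tendsto : Tendsto (fun h : ℝ => 2 * Real.pi * h) (𝓝[>] 0) (𝓝 0) :=
    tendsto_nhdsWithin_of_tendsto_nhds <| by
      simpa using (continuous_const_mul (2 * Real.pi)).tendsto 0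
  have exhaustion := (aecover_preimage_add_smul volume hU hx).comp_tendsto scale_tendsto
  rw [← integral_fourierChar_smul_fourier_eq (contDiff_slice ha x).continuous
    (integrable_slice ha.continuous hac x) hFf η]
  refine (exhaustion.integral_tendsto_of_countably_generated ?_).congr' ?_
  · simpa using (Real.fourierIntegral_convergent_iff (-η)).2 hFf
  · filter_upwards [self_mem_nhdsWithin] with h hh
    exact (inv_pow_smul_setIntegral_planeWaveKernel a η hh hU.measurableSet x).symm

lemma exists_norm_inv_pow_smul_setIntegral_planeWaveKernel_le
    (ha : ContDiff ℝ (finrank ℝ V + 1 : ℕ) a) (hac : HasCompactSupport a) (η : V) :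
    ∃ C : ℝ, ∀ h > 0, ∀ U : Set V, MeasurableSet U → ∀ x,
      ‖((2 * Real.pi * h) ^ finrank ℝ V)⁻¹ • ∫ y in U, planeWaveKernel a η h x y‖ ≤
        (Prod.fst '' tsupport a).indicator (fun _ => C) x := by
  obtain ⟨C, hC⟩ := exists_integral_norm_fourier_slice_le ha hac
  refine ⟨C, fun h hh U hU x => ?_⟩
  rw [inv_pow_smul_setIntegral_planeWaveKernel a η hh hU]
  calc
    _ ≤ ∫ ζ in {ζ | x + (2 * Real.pi * h) • ζ ∈ U}, ‖𝓕 (fun ξ => a (x, ξ)) ζ‖ := by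
      simpa using norm_integral_le_integral_norm (μ := volume.restrict _)
        fun ζ => Real.fourierChar ⟪ζ, η⟫ • 𝓕 (fun ξ => a (x, ξ)) ζ
    _ ≤ ∫ ζ, ‖𝓕 (fun ξ => a (x, ξ)) ζ‖ :=
      setIntegral_le_integral (integrable_fourier_slice ha hac x).norm
        (.of_forall fun _ => norm_nonneg _)
    _ ≤ _ := hC x

lemma tendsto_setIntegral_planeWaveKernel_of_isOpen [CompleteSpace F]
    (ha : ContDiff ℝ (finrank ℝ V + 1 : ℕ) a) (hac : HasCompactSupport a) (η : V)
    {U : Set V} (hU : IsOpen U) :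
    Tendsto (fun h : ℝ => ((2 * Real.pi * h) ^ finrank ℝ V)⁻¹ •
      ∫ x in U, ∫ y in U, planeWaveKernel a η h x y) (𝓝[>] 0) (𝓝 (∫ x in U, a (x, η))) := by
  obtain ⟨C, hC⟩ := exists_norm_inv_pow_smul_setIntegral_planeWaveKernel_le ha hac η
  have hK : IsCompact (Prod.fst '' tsupport a) := hac.isCompact.image continuous_fst
  simp_rw [← integral_smul _ fun x => ∫ y in U, planeWaveKernel a η _ x y]
  refine tendsto_integral_filter_of_dominated_convergence
    ((Prod.fst '' tsupport a).indicator fun _ => C) ?_ ?_ ?_ ?_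
  · exact .of_forall fun h => ((stronglyMeasurable_planeWaveKernel ha.continuous η
      h).integral_prod_right'.const_smul _).aestronglyMeasurable
  · filter_upwards [self_mem_nhdsWithin] with h hh
    exact .of_forall (hC h hh U hU.measurableSet)
  · exact ((integrable_indicator_iff hK.measurableSet).2
      (integrableOn_const hK.measure_lt_top.ne)).restrict
  · filter_upwards [ae_restrict_mem hU.measurableSet] with x hx
    exact tendsto_inv_pow_smul_setIntegral_planeWaveKernel ha hac η hU hx

end Pairing

lemma convex_setOf_forall_apply_mem {ι : Type*} {s : ι → Set ℝ}
    (hs : ∀ i, Convex ℝ (s i)) : Convex ℝ {x : EuclideanSpace ℝ ι | ∀ i, x i ∈ s i} :=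
  fun _ hx _ hy _ _ hs₀ ht₀ hst i => hs i (hx i) (hy i) hs₀ ht₀ hst

end PlaneWave

theorem plane_wave_defect_measure_pairing_general {V F : Type*} [NormedAddCommGroup V]
    [InnerProductSpace ℝ V] [FiniteDimensional ℝ V] [MeasurableSpace V] [BorelSpace V]
    [NormedAddCommGroup F] [NormedSpace ℂ F] [CompleteSpace F] {a : V × V → F}
    (ha : ContDiff ℝ (finrank ℝ V + 1 : ℕ) a) (hac : HasCompactSupport a) (η : V)
    {Q : Set V} (hQ : volume (frontier Q) = 0) :
    Tendsto
      (fun h : ℝ => ((2 * Real.pi * h) ^ finrank ℝ V)⁻¹ • ∫ x in Q, ∫ y in Q, ∫ ξ,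
        Complex.exp (Complex.I * Complex.ofReal (⟪x - y, ξ - η⟫ / h)) • a (x, ξ))
      (𝓝[>] 0) (𝓝 (∫ x in Q, a (x, η))) := by
  rw [← Measure.restrict_congr_set (interior_ae_eq_of_null_frontier hQ)]
  exact PlaneWave.tendsto_setIntegral_planeWaveKernel_of_isOpen ha hac η isOpen_interior

/-- Stationary phase computation from Section 5.1: the semiclassical pairing of the plane
wave `e^{i x₁ / h}` on the square torus against `Op_h(a)` converges, as `h → 0⁺`, to the
integral of `a(x, (1,0))` over the fundamental square. -/
theorem plane_wave_defect_measure_pairing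
    (a : EuclideanSpace ℝ (Fin 2) × EuclideanSpace ℝ (Fin 2) → ℂ)
    (ha : ContDiff ℝ (⊤ : ℕ∞) a) (hac : HasCompactSupport a) :
    Filter.Tendsto
      (fun h : ℝ =>
        Complex.ofReal (((2 * Real.pi * h) ^ 2)⁻¹) *
          ∫ x in {x : EuclideanSpace ℝ (Fin 2) | ∀ i, x i ∈ Set.Icc (0:ℝ) 1},
            ∫ y in {y : EuclideanSpace ℝ (Fin 2) | ∀ i, y i ∈ Set.Icc (0:ℝ) 1},
              ∫ ξ : EuclideanSpace ℝ (Fin 2),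
                a (x, ξ) *
                  Complex.exp (Complex.I * Complex.ofReal ((⟪x - y, ξ⟫ + y 0 - x 0) / h)))
      (𝓝[>] 0)
      (𝓝 (∫ x in {x : EuclideanSpace ℝ (Fin 2) | ∀ i, x i ∈ Set.Icc (0:ℝ) 1},
            a (x, EuclideanSpace.single (0 : Fin 2) (1:ℝ)))) := by
  have frontier_null := (PlaneWave.convex_setOf_forall_apply_mem fun _ : Fin 2 =>
    convex_Icc (0 : ℝ) 1).addHaar_frontier volume
  have phase_eq (x y ξ : EuclideanSpace ℝ (Fin 2)) :
      ⟪x - y, ξ⟫ + y 0 - x 0 = ⟪x - y, ξ - EuclideanSpace.single 0 1⟫ := by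
    simp [inner_sub_right, EuclideanSpace.inner_single_right]
    ring
  simpa [phase_eq, mul_comm] using plane_wave_defect_measure_pairing_general
    (ha.of_le (mod_cast le_top)) hac (EuclideanSpace.single 0 1) frontier_null
end

section
/- Let χ : ℝ → ℝ be smooth with compact support contained in (−1, 1) and χ ≡ 1 on [−1/2, 1/2]. For l ∈ ℕ set c_l := (1/(2^l · l!)) · √( (2l+1)! / (4π) ). Then lim_{l → ∞} ∫_0^{2π} ∫_{−π/2}^{π/2} c_l² | (cos ω)^l − χ(ω) e^{−l ω² / 2} |² cos ω dω dθ = 0. -/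
/-!
Write `b(ω) = exp (-ω² / 2)`. On `[-π/2, π/2]` one has `0 ≤ b - cos ≤ ω⁴ / 8`, so that
`|cosˡ - bˡ| ≤ l (ω⁴ / 8) bˡ⁻¹ = O(1/l)` uniformly in `ω`. By the central binomial bound
`√(2l + 1) * (2l choose l) ≤ 4ˡ`, the normalising constant satisfies `c_l² ≤ √l`; so replacing
`cosˡ` by `bˡ` costs only `O(√l / l²)`. What remains is `√l ∫ exp (-l ω²) (1 - χ)²`, in which
`√l exp (-l ω²)` concentrates at `ω = 0`, where `1 - χ` vanishes.
-/

open MeasureTheory Real Filter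
open scoped Topology

theorem centralBinom_sq_mul_le (n : ℕ) : n.centralBinom ^ 2 * (2 * n + 1) ≤ 16 ^ n := by
  induction n with
  | zero => simp
  | succ n ih =>
    refine Nat.le_of_mul_le_mul_left ?_ (show 0 < (n + 1) ^ 2 by positivity)
    calc (n + 1) ^ 2 * ((n + 1).centralBinom ^ 2 * (2 * (n + 1) + 1))
        = ((n + 1) * (n + 1).centralBinom) ^ 2 * (2 * n + 3) := by ring
      _ = n.centralBinom ^ 2 * (2 * n + 1) * (4 * ((2 * n + 1) * (2 * n + 3))) := by
        rw [Nat.succ_mul_centralBinom_succ]; ring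
      _ ≤ 16 ^ n * (4 * (4 * (n + 1) ^ 2)) := by
        gcongr ?_ * (4 * ?_)
        nlinarith
      _ = (n + 1) ^ 2 * 16 ^ (n + 1) := by ring

theorem sqrt_mul_centralBinom_le (n : ℕ) : √(2 * n + 1) * n.centralBinom ≤ 4 ^ n := by
  refine abs_le_of_sq_le_sq' ?_ (by positivity) |>.2
  rw [mul_pow, sq_sqrt (by positivity), ← pow_mul, mul_comm n 2, pow_mul, mul_comm]
  norm_num
  exact_mod_cast centralBinom_sq_mul_le n

/-- The constant `c_l` normalising the Gaussian beam `c_l e^{-ilθ} (cos ω)^l` in `L²(S²)`. -/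
noncomputable def gaussianBeamConst (l : ℕ) : ℝ :=
  1 / (2 ^ l * (Nat.factorial l : ℝ)) * √((Nat.factorial (2 * l + 1) : ℝ) / (4 * π))

theorem gaussianBeamConst_sq (l : ℕ) :
    gaussianBeamConst l ^ 2 = (2 * l + 1) * l.centralBinom / (4 * π * 4 ^ l) := by
  have hfact : ((2 * l + 1).factorial : ℝ) = (2 * l + 1) * l.centralBinom * l.factorial ^ 2 := by
    have h := Nat.choose_mul_factorial_mul_factorial (show l ≤ 2 * l by omega)
    rw [show 2 * l - l = l by omega, ← Nat.centralBinom_eq_two_mul_choose] at h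
    rw [Nat.factorial_succ, ← h]
    push_cast
    ring
  have h4 : ((2 : ℝ) ^ l) ^ 2 = 4 ^ l := by rw [← pow_mul, mul_comm, pow_mul]; norm_num
  rw [gaussianBeamConst, mul_pow, sq_sqrt (by positivity), hfact, div_pow, mul_pow, h4]
  field_simp

theorem gaussianBeamConst_sq_le_sqrt {l : ℕ} (hl : l ≠ 0) : gaussianBeamConst l ^ 2 ≤ √l := by
  have hl' : (1 : ℝ) ≤ l := by exact_mod_cast Nat.one_le_iff_ne_zero.2 hl
  have hsqrt : √(2 * l + 1) ≤ 2 * √l := by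
    rw [sqrt_le_left (by positivity), mul_pow, sq_sqrt (by positivity)]
    linarith
  rw [gaussianBeamConst_sq, div_le_iff₀ (by positivity)]
  calc (2 * l + 1) * (l.centralBinom : ℝ)
      = √(2 * l + 1) * (√(2 * l + 1) * l.centralBinom) := by
        rw [← mul_assoc, mul_self_sqrt (by positivity)]
    _ ≤ 2 * √l * 4 ^ l := by
        gcongr
        exact sqrt_mul_centralBinom_le l
    _ ≤ √l * (4 * π * 4 ^ l) := by
        have : 0 ≤ √(l : ℝ) * 4 ^ l := by positivity
        nlinarith [pi_gt_three]

theorem cos_le_exp_neg_sq_div_two {x : ℝ} (hx : |x| ≤ π / 2) : cos x ≤ exp (-x ^ 2 / 2) := by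
  have hderiv (y : ℝ) : HasDerivAt (fun y ↦ cos y * exp (y ^ 2 / 2))
      ((y * cos y - sin y) * exp (y ^ 2 / 2)) y := by
    convert! (hasDerivAt_cos y).mul (((hasDerivAt_pow 2 y).div_const 2).exp) using 1
    ring
  have hanti : AntitoneOn (fun y ↦ cos y * exp (y ^ 2 / 2)) (Set.Icc 0 (π / 2)) := by
    refine antitoneOn_of_deriv_nonpos (convex_Icc _ _) (by fun_prop)
      (fun y _ ↦ (hderiv y).differentiableAt.differentiableWithinAt) fun y hy ↦ ?_
    rw [interior_Icc] at hy
    have hcos : 0 < cos y := cos_pos_of_mem_Ioo ⟨by linarith [hy.1, pi_pos], hy.2⟩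
    have htan : y ≤ sin y / cos y := tan_eq_sin_div_cos y ▸ le_tan hy.1.le hy.2
    rw [(hderiv y).deriv]
    exact mul_nonpos_of_nonpos_of_nonneg (sub_nonpos.2 ((le_div_iff₀ hcos).1 htan)) (exp_pos _).le
  have h := hanti (Set.left_mem_Icc.2 (by positivity)) ⟨abs_nonneg x, hx⟩ (abs_nonneg x)
  simp only [cos_abs, sq_abs, cos_zero, ne_eq, OfNat.ofNat_ne_zero, not_false_eq_true, zero_pow,
    zero_div, exp_zero, mul_one] at h
  rwa [neg_div, exp_neg, ← one_div, le_div_iff₀ (exp_pos _)]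

theorem exp_neg_le_quadratic {x : ℝ} (hx : 0 ≤ x) : exp (-x) ≤ 1 - x + x ^ 2 / 2 := by
  have hexp := quadratic_le_exp_of_nonneg hx
  rw [exp_neg, inv_le_iff_one_le_mul₀ (exp_pos x)]
  nlinarith [sq_nonneg (x - 1), sq_nonneg (x ^ 2)]

theorem abs_cos_sub_exp_neg_sq_div_two_le {x : ℝ} (hx : |x| ≤ π / 2) :
    |cos x - exp (-x ^ 2 / 2)| ≤ x ^ 4 / 8 := by
  have hcos := one_sub_sq_div_two_le_cos (x := x)
  have hexp := exp_neg_le_quadratic (x := x ^ 2 / 2) (by positivity)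
  rw [abs_sub_comm, abs_of_nonneg (sub_nonneg.2 (cos_le_exp_neg_sq_div_two hx)), neg_div]
  linarith

theorem pow_four_mul_exp_neg_mul_sq_div_two_le {t : ℝ} (ht : 0 < t) (x : ℝ) :
    x ^ 4 * exp (-(t * x ^ 2) / 2) ≤ 8 / t ^ 2 := by
  have hnonneg : 0 ≤ t * x ^ 2 / 2 := by positivity
  have hexp := quadratic_le_exp_of_nonneg hnonneg
  rw [neg_div, exp_neg, ← div_eq_mul_inv, div_le_div_iff₀ (exp_pos _) (by positivity)]
  linarith

theorem abs_cos_pow_sub_exp_le {l : ℕ} (hl : 2 ≤ l) {x : ℝ} (hx : |x| ≤ π / 2) :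
    |cos x ^ l - exp (-(l * x ^ 2) / 2)| ≤ 4 / l := by
  obtain ⟨n, rfl⟩ : ∃ n, l = n + 1 := ⟨l - 1, by omega⟩
  have hn : (1 : ℝ) ≤ n := by exact_mod_cast (show 1 ≤ n by omega)
  have hcos : 0 ≤ cos x := cos_nonneg_of_mem_Icc (abs_le.1 hx)
  have hexp (m : ℕ) : exp (-(m * x ^ 2) / 2) = exp (-x ^ 2 / 2) ^ m := by
    rw [← exp_nat_mul]
    congr 1
    ring
  calc |cos x ^ (n + 1) - exp (-((n + 1 : ℕ) * x ^ 2) / 2)|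
      ≤ |cos x - exp (-x ^ 2 / 2)| * (n + 1 : ℕ) * max |cos x| |exp (-x ^ 2 / 2)| ^ n := by
        rw [hexp]
        exact abs_pow_sub_pow_le ..
    _ = |cos x - exp (-x ^ 2 / 2)| * (n + 1 : ℕ) * exp (-(n * x ^ 2) / 2) := by
        rw [abs_of_nonneg hcos, abs_exp, max_eq_right (cos_le_exp_neg_sq_div_two hx), hexp]
    _ ≤ x ^ 4 / 8 * (n + 1 : ℕ) * exp (-(n * x ^ 2) / 2) := by
        gcongr
        exact abs_cos_sub_exp_neg_sq_div_two_le hx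
    _ = (n + 1 : ℕ) / 8 * (x ^ 4 * exp (-(n * x ^ 2) / 2)) := by ring
    _ ≤ (n + 1 : ℕ) / 8 * (8 / n ^ 2) := by
        gcongr
        exact pow_four_mul_exp_neg_mul_sq_div_two_le (by linarith) x
    _ ≤ 4 / (n + 1 : ℕ) := by
        push_cast
        rw [div_mul_div_comm, div_le_div_iff₀ (by positivity) (by positivity)]
        nlinarith

theorem tendsto_integral_sqrt_mul_exp_neg_mul_sq {g : ℝ → ℝ} (hg : Integrable g)
    (hg0 : ContinuousAt g 0) :
    Tendsto (fun c : ℝ ↦ ∫ x, √c * exp (-(c * x ^ 2)) * g x) atTop (𝓝 (√π * g 0)) := by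
  have hmass : ∫ x : ℝ, exp (-x ^ 2) / √π = 1 := by
    rw [integral_div]
    have h := integral_gaussian 1
    simp only [neg_mul, one_mul, div_one] at h
    rw [h, div_self (by positivity)]
  have hdecay : Tendsto (fun x : ℝ ↦ ‖x‖ ^ Module.finrank ℝ ℝ * (exp (-x ^ 2) / √π))
      (Bornology.cobounded ℝ) (𝓝 0) := by
    have h := (tendsto_rpow_abs_mul_exp_neg_mul_sq_cocompact one_pos 1).div_const √π
    rw [zero_div, ← Metric.cobounded_eq_cocompact] at h
    simpa [mul_div_assoc] using h
  have hpeak := (tendsto_integral_comp_smul_smul_of_integrable (fun x ↦ by positivity) hmass hdecay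
    hg hg0).comp tendsto_sqrt_atTop |>.const_mul √π
  refine hpeak.congr' ?_
  filter_upwards [eventually_ge_atTop 0] with c hc
  simp only [Function.comp_apply, ← integral_const_mul]
  refine integral_congr_ae (.of_forall fun x ↦ ?_)
  simp only [Module.finrank_self, pow_one, smul_eq_mul, mul_pow, sq_sqrt hc]
  field_simp

theorem tendsto_intervalIntegral_sqrt_mul_exp_neg_mul_sq {g : ℝ → ℝ} {a b : ℝ} (ha : a < 0)
    (hb : 0 < b) (hg : IntervalIntegrable g volume a b) (hg0 : ContinuousAt g 0) :
    Tendsto (fun c : ℝ ↦ ∫ x in a..b, √c * exp (-(c * x ^ 2)) * g x) atTop (𝓝 (√π * g 0)) := by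
  have hab : a ≤ b := (ha.trans hb).le
  have heq : (Set.Ioc a b).indicator g =ᶠ[𝓝 0] g := by
    filter_upwards [Ioc_mem_nhds ha hb] with x hx using Set.indicator_of_mem hx g
  have hlim := tendsto_integral_sqrt_mul_exp_neg_mul_sq
    (((intervalIntegrable_iff_integrableOn_Ioc_of_le hab).1 hg).integrable_indicator
      measurableSet_Ioc) (hg0.congr heq.symm)
  rw [heq.eq_of_nhds] at hlim
  refine hlim.congr fun c ↦ ?_
  rw [intervalIntegral.integral_of_le hab, ← integral_indicator measurableSet_Ioc]
  simp only [Set.indicator_mul_right]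

/-- The density of `‖φ_l - u_l‖²` in the coordinate `ω`, for the beam `φ_l` and its approximant
`u_l` with cutoff `χ`: the common phase `e^{-ilθ}` has modulus one, and `cos ω` is the area
density. -/
noncomputable def gaussianBeamError (χ : ℝ → ℝ) (l : ℕ) (ω : ℝ) : ℝ :=
  gaussianBeamConst l ^ 2 * |cos ω ^ l - χ ω * exp (-(l * ω ^ 2) / 2)| ^ 2 * cos ω

theorem abs_gaussianBeamError_le (χ : ℝ → ℝ) {l : ℕ} (hl : 2 ≤ l) {ω : ℝ} (hω : |ω| ≤ π / 2) :
    |gaussianBeamError χ l ω| ≤ 32 / l + 2 * (√l * exp (-(l * ω ^ 2)) * (1 - χ ω) ^ 2) := by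
  have hl' : (2 : ℝ) ≤ l := by exact_mod_cast hl
  have hprofile : (cos ω ^ l - exp (-(l * ω ^ 2) / 2)) ^ 2 ≤ (4 / l) ^ 2 := by
    rw [← sq_abs]
    gcongr
    exact abs_cos_pow_sub_exp_le hl hω
  have hexp : exp (-(l * ω ^ 2) / 2) ^ 2 = exp (-(l * ω ^ 2)) := by
    rw [← exp_nat_mul]
    congr 1
    push_cast
    ring
  have hsqrt : √(l : ℝ) ≤ l := sqrt_le_left (by positivity) |>.2 (by nlinarith)
  calc |gaussianBeamError χ l ω|
      = gaussianBeamConst l ^ 2 * (cos ω ^ l - exp (-(l * ω ^ 2) / 2)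
          + (1 - χ ω) * exp (-(l * ω ^ 2) / 2)) ^ 2 * |cos ω| := by
        rw [gaussianBeamError, abs_mul, abs_mul, sq_abs, abs_sq, abs_sq]
        ring
    _ ≤ √l * (2 * ((cos ω ^ l - exp (-(l * ω ^ 2) / 2)) ^ 2
          + ((1 - χ ω) * exp (-(l * ω ^ 2) / 2)) ^ 2)) * 1 := by
        gcongr
        · exact gaussianBeamConst_sq_le_sqrt (by omega)
        · exact add_sq_le
        · exact abs_cos_le_one ω
    _ ≤ √l * (2 * ((4 / l) ^ 2 + ((1 - χ ω) * exp (-(l * ω ^ 2) / 2)) ^ 2)) * 1 := by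
        gcongr
    _ = √l * (32 / l ^ 2) + 2 * (√l * exp (-(l * ω ^ 2)) * (1 - χ ω) ^ 2) := by
        rw [mul_pow, hexp]
        ring
    _ ≤ l * (32 / l ^ 2) + 2 * (√l * exp (-(l * ω ^ 2)) * (1 - χ ω) ^ 2) := by
        gcongr
    _ = 32 / l + 2 * (√l * exp (-(l * ω ^ 2)) * (1 - χ ω) ^ 2) := by
        field_simp

theorem tendsto_integral_gaussianBeamError {χ : ℝ → ℝ}
    (hχ : MemLp χ 2 (volume.restrict (Set.Icc (-(π / 2)) (π / 2)))) (hχ0 : ContinuousAt χ 0)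
    (hχ1 : χ 0 = 1) :
    Tendsto (fun l ↦ ∫ ω in -(π / 2)..π / 2, gaussianBeamError χ l ω) atTop (𝓝 0) := by
  have hpi : 0 < π / 2 := by positivity
  have hle : -(π / 2) ≤ π / 2 := by linarith
  have hint : IntervalIntegrable (fun ω ↦ (1 - χ ω) ^ 2) volume (-(π / 2)) (π / 2) :=
    (intervalIntegrable_iff_integrableOn_Icc_of_le hle).2 ((memLp_const 1).sub hχ).integrable_sq
  have hweighted (l : ℕ) : IntervalIntegrable
      (fun ω ↦ 2 * (√l * exp (-(l * ω ^ 2)) * (1 - χ ω) ^ 2)) volume (-(π / 2)) (π / 2) :=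
    (hint.continuousOn_mul (by fun_prop)).const_mul 2
  have hconc := (tendsto_intervalIntegral_sqrt_mul_exp_neg_mul_sq (neg_lt_zero.2 hpi) hpi hint
    (by fun_prop)).comp tendsto_natCast_atTop_atTop
  have hbound := ((tendsto_const_div_atTop_nhds_zero_nat 32).const_mul π).add (hconc.const_mul 2)
  simp only [hχ1, sub_self, ne_eq, OfNat.ofNat_ne_zero, not_false_eq_true, zero_pow, mul_zero,
    add_zero] at hbound
  refine squeeze_zero_norm' ?_ hbound
  filter_upwards [eventually_ge_atTop 2] with l hl
  calc ‖∫ ω in -(π / 2)..π / 2, gaussianBeamError χ l ω‖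
      ≤ ∫ ω in -(π / 2)..π / 2, (32 / l + 2 * (√l * exp (-(l * ω ^ 2)) * (1 - χ ω) ^ 2)) :=
        intervalIntegral.norm_integral_le_of_norm_le hle (.of_forall fun ω hω ↦
          abs_gaussianBeamError_le χ hl (abs_le.2 ⟨hω.1.le, hω.2⟩))
          (intervalIntegrable_const.add (hweighted l))
    _ = π * (32 / l) + 2 * ∫ ω in -(π / 2)..π / 2, √l * exp (-(l * ω ^ 2)) * (1 - χ ω) ^ 2 := by
        rw [intervalIntegral.integral_add intervalIntegrable_const (hweighted l),
          intervalIntegral.integral_const, intervalIntegral.integral_const_mul, smul_eq_mul]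
        ring

theorem gaussian_beam_approximation_general {χ : ℝ → ℝ}
    (hχ : MemLp χ 2 (volume.restrict (Set.Icc (-(π / 2)) (π / 2)))) (hχ0 : ContinuousAt χ 0)
    (hχ1 : χ 0 = 1) :
    Tendsto (fun l ↦ ∫ _θ in (0 : ℝ)..2 * π, ∫ ω in -(π / 2)..π / 2, gaussianBeamError χ l ω)
      atTop (𝓝 0) := by
  simpa only [intervalIntegral.integral_const, smul_zero] using
    (tendsto_integral_gaussianBeamError hχ hχ0 hχ1).const_smul (2 * π - 0)

/-- Section 5.2.2: the Gaussian approximant `c_l e^{-ilθ} χ(ω) e^{-lω²/2}` differs from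
the Gaussian beam `c_l e^{-ilθ} (cos ω)^l` by `o(1)` in `L²(S²)` as `l → ∞`. -/
theorem gaussian_beam_approximation
    (χ : ℝ → ℝ) (hχ : ContDiff ℝ (⊤ : ℕ∞) χ) (hχc : HasCompactSupport χ)
    (hχsupp : tsupport χ ⊆ Set.Ioo (-1 : ℝ) 1)
    (hχ1 : Set.EqOn χ 1 (Set.Icc (-(1/2) : ℝ) (1/2))) :
    Filter.Tendsto
      (fun l : ℕ =>
        ∫ θ in (0:ℝ)..(2 * Real.pi),
          ∫ ω in (-(Real.pi / 2))..(Real.pi / 2),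
            ((1 / (2 ^ l * (Nat.factorial l : ℝ)))
                * Real.sqrt ((Nat.factorial (2 * l + 1) : ℝ) / (4 * Real.pi))) ^ 2
              * |Real.cos ω ^ l - χ ω * Real.exp (-((l : ℝ) * ω ^ 2) / 2)| ^ 2
              * Real.cos ω)
      Filter.atTop (𝓝 0) :=
  gaussian_beam_approximation_general ((hχ.continuous.memLp_of_hasCompactSupport hχc).restrict _)
    hχ.continuous.continuousAt (hχ1 ⟨by norm_num, by norm_num⟩)
end
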